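/- arXiv:1609.08751 — 4 statements merged into one kernel-verified Lean document; each statement's English description precedes it below -/
import Mathlib

section
/- Let d ≥ 2 and λ ∈ [0,1). Let T x = (x₁/‖x‖) e₁ + ((1 − 1/‖x‖) x₂ + λ) e₂ + (1 − 1/‖x‖) ∑_{j=3}^d x_j e_j for x ≠ 0. Then for x ∈ ℝ^d \ {0}, T x = x if and only if x = x* or x = x_*, where x* = √(1−λ²) e₁ + λ e₂ and x_* = −√(1−λ²) e₁ + λ e₂; i.e., the only fixed points of T are the two intersection points of the unit sphere with the line L_λ. -/
noncomputable section

open Metric Set Filter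

/-- Euclidean space `ℝ^d` with `d = d' + 2 ≥ 2`. -/
abbrev Euc (d : ℕ) := EuclideanSpace ℝ (Fin (d + 2))

/-- The standard basis vectors. -/
def e (d : ℕ) (j : Fin (d + 2)) : Euc d := EuclideanSpace.single j 1

/-- The Douglas–Rachford operator for the unit sphere and the line
`L_λ = {t e₁ + λ e₂}`, given by its explicit formula
`T x = (x₁/‖x‖) e₁ + ((1 − 1/‖x‖) x₂ + λ) e₂ + (1 − 1/‖x‖) ∑_{j=3}^d x_j e_j`. -/
def DR (d : ℕ) (lam : ℝ) (x : Euc d) : Euc d :=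
  (x 0 / ‖x‖) • e d 0 + ((1 - 1 / ‖x‖) * x 1 + lam) • e d 1 +
    ∑ j ∈ Finset.univ.filter (fun j : Fin (d + 2) => 2 ≤ (j : ℕ)),
      ((1 - 1 / ‖x‖) * x j) • e d j

/-- The intersection point `x* = √(1−λ²) e₁ + λ e₂`. -/
def xStar (d : ℕ) (lam : ℝ) : Euc d := Real.sqrt (1 - lam ^ 2) • e d 0 + lam • e d 1

/-- The second intersection point `x_* = −√(1−λ²) e₁ + λ e₂`. -/
def xStarMinus (d : ℕ) (lam : ℝ) : Euc d :=
  (-Real.sqrt (1 - lam ^ 2)) • e d 0 + lam • e d 1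

theorem e_app (d : ℕ) (j i : Fin (d + 2)) : (e d j) i = if i = j then 1 else 0 := by
  simp [e, Pi.single_apply]

theorem DR_app (d : ℕ) (lam : ℝ) (x : Euc d) (i : Fin (d + 2)) :
    (DR d lam x) i = (x 0 / ‖x‖) * (if i = 0 then 1 else 0)
      + ((1 - 1 / ‖x‖) * x 1 + lam) * (if i = 1 then 1 else 0)
      + (if 2 ≤ (i : ℕ) then (1 - 1 / ‖x‖) * x i else 0) := by
  simp only [DR, PiLp.add_apply, PiLp.smul_apply, WithLp.ofLp_sum, Finset.sum_apply, e_app,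
    smul_eq_mul, mul_ite, mul_one, mul_zero, Finset.sum_ite_eq, Finset.mem_filter,
    Finset.mem_univ, true_and]

theorem nsq (d : ℕ) (x : Euc d) :
    ‖x‖ ^ 2 = x 0 ^ 2 + x 1 ^ 2 + ∑ k : Fin d, x k.succ.succ ^ 2 := by
  rw [EuclideanSpace.real_norm_sq_eq, Fin.sum_univ_succ, Fin.sum_univ_succ]
  exact (add_assoc _ _ _).symm

theorem ext3 (d : ℕ) (x y : Euc d) :
    x = y ↔ x 0 = y 0 ∧ x 1 = y 1 ∧ ∀ k : Fin d, x k.succ.succ = y k.succ.succ := by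
  constructor
  · rintro rfl
    simp
  · rintro ⟨h0, h1, h2⟩
    ext i
    refine Fin.cases h0 (fun j => ?_) i
    exact Fin.cases h1 (fun k => h2 k) j

theorem fin_ne1 (d : ℕ) (k : Fin d) : k.succ.succ ≠ (1 : Fin (d + 2)) := by
  intro h
  have := congrArg Fin.val h
  simp at this

theorem pt_iff (d : ℕ) (a b : ℝ) (x : Euc d) : x = a • e d 0 + b • e d 1 ↔
    x 0 = a ∧ x 1 = b ∧ ∀ k : Fin d, x k.succ.succ = 0 := by
  rw [ext3]
  simp [e_app, fin_ne1]

theorem DR_iff (d : ℕ) (lam : ℝ) (x : Euc d) : DR d lam x = x ↔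
    x 0 / ‖x‖ = x 0 ∧ (1 - 1 / ‖x‖) * x 1 + lam = x 1 ∧
      ∀ k : Fin d, (1 - 1 / ‖x‖) * x k.succ.succ = x k.succ.succ := by
  rw [ext3]
  simp only [DR_app]
  simp [fin_ne1]

/-- For `λ ∈ [0,1)` and `x ≠ 0`, `T x = x` iff `x = x*` or `x = x_*`. -/
theorem stmt2 (d : ℕ) (lam : ℝ) (h0 : 0 ≤ lam) (h1 : lam < 1) (x : Euc d) (hx : x ≠ 0) :
    DR d lam x = x ↔ x = xStar d lam ∨ x = xStarMinus d lam := by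
  have hn : 0 < ‖x‖ := norm_pos_iff.mpr hx
  have hs := nsq d x
  have hl : 0 < 1 - lam ^ 2 := by nlinarith
  have hq := Real.sq_sqrt hl.le
  rw [DR_iff, xStar, xStarMinus, pt_iff, pt_iff]
  constructor
  · rintro ⟨a, b, c⟩
    have c' : ∀ k : Fin d, x k.succ.succ = 0 := by
      intro k
      have := c k
      field_simp at this
      linarith
    have b' : x 1 = lam * ‖x‖ := by
      field_simp at b
      linarith
    have a' : x 0 * (1 - ‖x‖) = 0 := by
      field_simp at a
      linarith
    simp only [c', ne_eq, OfNat.ofNat_ne_zero, not_false_eq_true, zero_pow,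
      Finset.sum_const_zero, add_zero] at hs
    have hN : ‖x‖ = 1 := by
      rcases mul_eq_zero.mp a' with h | h
      · rw [h, b'] at hs
        have : 0 < (1 - lam ^ 2) * ‖x‖ ^ 2 := by positivity
        nlinarith
      · linarith
    rw [hN] at hs b'
    have h1' : x 1 = lam := by linarith
    rw [h1'] at hs
    have : x 0 ^ 2 = Real.sqrt (1 - lam ^ 2) ^ 2 := by linarith
    rcases sq_eq_sq_iff_eq_or_eq_neg.mp this with h | h
    · exact Or.inl ⟨h, h1', c'⟩
    · exact Or.inr ⟨h, h1', c'⟩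
  · intro h
    have h' : x 0 ^ 2 = 1 - lam ^ 2 ∧ x 1 = lam ∧ ∀ k : Fin d, x k.succ.succ = 0 := by
      rcases h with ⟨a, b, c⟩ | ⟨a, b, c⟩
      · exact ⟨by rw [a, hq], b, c⟩
      · exact ⟨by rw [a, neg_sq, hq], b, c⟩
    obtain ⟨a, b, c⟩ := h'
    simp only [a, b, c, ne_eq, OfNat.ofNat_ne_zero, not_false_eq_true, zero_pow,
      Finset.sum_const_zero, add_zero] at hs
    have hN : ‖x‖ = 1 := by nlinarith
    simp [hN, b, c]
end
end

section
/- Let d ≥ 2 and λ ∈ [0,1). Define F : Δ → ℝ by F(x) = ½‖x − λe₂‖² − λ log(1 + √(1 − x₁²)) + λ√(1 − x₁²) + (λ−1) log x₁, and let x* = √(1−λ²) e₁ + λ e₂. Then F(x*) < F(x) for every x ∈ Δ with x ≠ x*. -/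
noncomputable section

open Metric Set Filter

/-- The Lyapunov-type function of Benoist:
`F(x) = ½‖x − λe₂‖² − λ log(1 + √(1 − x₁²)) + λ√(1 − x₁²) + (λ−1) log x₁`. -/
def F (d : ℕ) (lam : ℝ) (x : Euc d) : ℝ :=
  (1 / 2) * ‖x - lam • e d 1‖ ^ 2 - lam * Real.log (1 + Real.sqrt (1 - (x 0) ^ 2)) +
    lam * Real.sqrt (1 - (x 0) ^ 2) + (lam - 1) * Real.log (x 0)

/-- `Δ = {x : 0 < x₁ ≤ 1}`. -/
def Delta (d : ℕ) : Set (Euc d) := {x | 0 < x 0 ∧ x 0 ≤ 1}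

def gAux (l s : ℝ) : ℝ :=
  (1 - s ^ 2) / 2 + l * s - (1 + l) / 2 * Real.log (1 + s) - (1 - l) / 2 * Real.log (1 - s)

theorem gAux_deriv (l s : ℝ) (h0 : -1 < s) (h1 : s < 1) :
    HasDerivAt (gAux l) ((s - l) * s ^ 2 / (1 - s ^ 2)) s := by
  have ha : (1 + s) ≠ 0 := by linarith
  have hb : (1 - s) ≠ 0 := by linarith
  have hc : 1 - s ^ 2 ≠ 0 := by nlinarith
  have e1 : HasDerivAt (fun s : ℝ => 1 + s) 1 s := (hasDerivAt_id s).const_add 1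
  have e2 : HasDerivAt (fun s : ℝ => 1 - s) (-1) s := (hasDerivAt_id s).const_sub 1
  have e3 : HasDerivAt (fun s : ℝ => (1 - s ^ 2) / 2) (-(2 * s) / 2) s := by
    have := ((hasDerivAt_pow 2 s).const_sub 1).div_const 2
    simpa using this
  have e4 : HasDerivAt (fun s : ℝ => l * s) (l * 1) s := (hasDerivAt_id s).const_mul l
  have := ((e3.add e4).sub ((e1.log ha).const_mul ((1 + l) / 2))).sub
    ((e2.log hb).const_mul ((1 - l) / 2))
  refine HasDerivAt.congr_deriv this ?_
  have hc' : 1 - s ^ 2 = (1 + s) * (1 - s) := by ring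
  rw [hc']
  field_simp
  ring

theorem gAux_min (l s : ℝ) (h0 : 0 ≤ l) (h1 : l < 1) (hs0 : 0 ≤ s) (hs1 : s < 1) (hne : s ≠ l) :
    gAux l l < gAux l s := by
  rcases lt_or_gt_of_ne hne with h | h
  · have : StrictAntiOn (gAux l) (Icc s l) := by
      apply strictAntiOn_of_deriv_neg (convex_Icc _ _)
      · intro t ht
        exact (gAux_deriv l t (by linarith [ht.1]) (by linarith [ht.2])).continuousAt.continuousWithinAt
      · intro t ht
        rw [interior_Icc] at ht
        obtain ⟨ht1, ht2⟩ := ht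
        rw [(gAux_deriv l t (by linarith) (by linarith)).deriv]
        have : 0 < t := by linarith
        apply div_neg_of_neg_of_pos
        · exact mul_neg_of_neg_of_pos (by linarith) (by positivity)
        · nlinarith
    exact this ⟨le_rfl, h.le⟩ ⟨h.le, le_rfl⟩ h
  · have : StrictMonoOn (gAux l) (Icc l s) := by
      apply strictMonoOn_of_deriv_pos (convex_Icc _ _)
      · intro t ht
        exact (gAux_deriv l t (by linarith [ht.1]) (by linarith [ht.2])).continuousAt.continuousWithinAt
      · intro t ht
        rw [interior_Icc] at ht
        obtain ⟨ht1, ht2⟩ := ht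
        rw [(gAux_deriv l t (by linarith) (by linarith)).deriv]
        have : 0 < t := by linarith
        apply div_pos
        · exact mul_pos (by linarith) (by positivity)
        · nlinarith
    exact this ⟨le_rfl, h.le⟩ ⟨h.le, le_rfl⟩ h

theorem F_eq (d : ℕ) (l : ℝ) (x : Euc d) (hx : x ∈ Delta d) :
    F d l x = gAux l (Real.sqrt (1 - (x 0) ^ 2)) +
      (1 / 2) * ∑ i : Fin (d + 1), ((x - l • e d 1) i.succ) ^ 2 := by
  obtain ⟨hp, hl⟩ := hx
  have hnn : 0 ≤ 1 - (x 0) ^ 2 := by nlinarith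
  have hsq := Real.sq_sqrt hnn
  have hs0 := Real.sqrt_nonneg (1 - (x 0) ^ 2)
  unfold F gAux
  set s := Real.sqrt (1 - (x 0) ^ 2) with hs
  have hs1 : s < 1 := by
    by_contra hcon
    push Not at hcon
    nlinarith [pow_pos hp 2]
  have hy : (x - l • e d 1) 0 = x 0 := by simp [e]
  have hlog : 2 * Real.log (x 0) = Real.log (1 + s) + Real.log (1 - s) := by
    rw [← Real.log_mul (by linarith) (by linarith)]
    have : (1 + s) * (1 - s) = (x 0) ^ 2 := by linarith
    rw [this, Real.log_pow]
    norm_num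
  rw [EuclideanSpace.norm_sq_eq, Fin.sum_univ_succ]
  simp only [Real.norm_eq_abs, sq_abs]
  rw [hy]
  have : Real.log (x 0) = (Real.log (1 + s) + Real.log (1 - s)) / 2 := by linarith
  rw [this, hsq]
  ring

/-- For `λ ∈ [0,1)`, `F(x*) < F(x)` for every `x ∈ Δ` with `x ≠ x*`. -/
theorem stmt3 (d : ℕ) (lam : ℝ) (h0 : 0 ≤ lam) (h1 : lam < 1) :
    ∀ x ∈ Delta d, x ≠ xStar d lam → F d lam (xStar d lam) < F d lam x := by
  intro x hx hne
  have hq : 0 < 1 - lam ^ 2 := by nlinarith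
  have hs0 : (xStar d lam) 0 = Real.sqrt (1 - lam ^ 2) := by
    simp [xStar, e]
  have hss : Real.sqrt (1 - (xStar d lam 0) ^ 2) = lam := by
    rw [hs0, Real.sq_sqrt hq.le]
    rw [show 1 - (1 - lam ^ 2) = lam ^ 2 by ring, Real.sqrt_sq h0]
  have hsD : xStar d lam ∈ Delta d := by
    refine ⟨?_, ?_⟩
    · rw [hs0]; exact Real.sqrt_pos.2 hq
    · rw [hs0]; exact Real.sqrt_le_one.2 (by nlinarith)
  rw [F_eq d lam x hx, F_eq d lam _ hsD, hss]
  have hz : ∑ i : Fin (d + 1), ((xStar d lam - lam • e d 1) i.succ) ^ 2 = 0 := by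
    apply Finset.sum_eq_zero
    intro i _
    simp [xStar, e]
  rw [hz]
  have hn : 0 ≤ ∑ i : Fin (d + 1), ((x - lam • e d 1) i.succ) ^ 2 :=
    Finset.sum_nonneg fun i _ => sq_nonneg _
  obtain ⟨hp, hl⟩ := hx
  have hnn : 0 ≤ 1 - (x 0) ^ 2 := by nlinarith
  have hsq := Real.sq_sqrt hnn
  by_cases hc : Real.sqrt (1 - (x 0) ^ 2) = lam
  · rw [hc]
    have hx0 : x 0 = Real.sqrt (1 - lam ^ 2) := by
      rw [← hc, hsq, show 1 - (1 - (x 0) ^ 2) = (x 0) ^ 2 by ring, Real.sqrt_sq hp.le]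
    have hpos : 0 < ∑ i : Fin (d + 1), ((x - lam • e d 1) i.succ) ^ 2 := by
      refine lt_of_le_of_ne hn fun hE => hne ?_
      have hall := (Finset.sum_eq_zero_iff_of_nonneg (fun i _ => sq_nonneg _)).1 hE.symm
      ext i
      refine Fin.cases ?_ (fun j => ?_) i
      · rw [hx0, hs0]
      · have h2 : (x - lam • e d 1) j.succ = 0 := pow_eq_zero_iff two_ne_zero |>.1 (hall j (Finset.mem_univ _))
        have h3 : (xStar d lam - lam • e d 1) j.succ = 0 := by simp [xStar, e]
        simp only [PiLp.sub_apply] at h2 h3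
        linarith
    linarith
  · have hs1 : Real.sqrt (1 - (x 0) ^ 2) < 1 := by
      by_contra hcon
      push Not at hcon
      nlinarith [pow_pos hp 2]
    have := gAux_min lam _ h0 h1 (Real.sqrt_nonneg _) hs1 hc
    linarith
end
end

section
/- Let d ≥ 2 and λ ∈ [0,1). Define F : Δ → ℝ by F(x) = ½‖x − λe₂‖² − λ log(1 + √(1 − x₁²)) + λ√(1 − x₁²) + (λ−1) log x₁, and let T x = (x₁/‖x‖) e₁ + ((1 − 1/‖x‖) x₂ + λ) e₂ + (1 − 1/‖x‖) ∑_{j=3}^d x_j e_j. Then F(T x) ≤ F(x) for every x ∈ Δ (note T x ∈ Δ whenever x ∈ Δ). -/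
noncomputable section

open Metric Set Filter

lemma le_of_hd {f f' : ℝ → ℝ} {a b : ℝ} (hab : a ≤ b)
    (hd : ∀ x ∈ Icc a b, HasDerivAt f (f' x) x) (hn : ∀ x ∈ Icc a b, 0 ≤ f' x) : f a ≤ f b := by
  have hm : MonotoneOn f (Icc a b) := by
    apply monotoneOn_of_deriv_nonneg (convex_Icc a b)
    · exact fun x hx => (hd x hx).continuousAt.continuousWithinAt
    · intro x hx
      exact (hd x (interior_subset hx)).differentiableAt.differentiableWithinAt
    · intro x hx
      rw [(hd x (interior_subset hx)).deriv]
      exact hn x (interior_subset hx)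
  exact hm (left_mem_Icc.2 hab) (right_mem_Icc.2 hab) hab

lemma ge_of_hd {f f' : ℝ → ℝ} {a b : ℝ} (hab : a ≤ b)
    (hd : ∀ x ∈ Icc a b, HasDerivAt f (f' x) x) (hn : ∀ x ∈ Icc a b, f' x ≤ 0) : f b ≤ f a := by
  have := le_of_hd (f := fun x => - f x) (f' := fun x => - f' x) hab
    (fun x hx => (hd x hx).neg) (fun x hx => by have := hn x hx; linarith)
  linarith

def Kf (y : ℝ) : ℝ := (Real.log (1 + y) - Real.log (1 - y)) / 2
def Mf (y : ℝ) : ℝ := (Real.log (1 + y) + Real.log (1 - y)) / 2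
def Jf (c y : ℝ) : ℝ := y - c + Kf c - Kf y
def Pf (c u y : ℝ) : ℝ := c * (Real.sqrt (1 - y ^ 2) / u - 1) - Jf c y
def Qf (c y : ℝ) : ℝ := c * Jf c y - Mf y + Mf c + (c ^ 2 - y ^ 2) / 2

lemma hK {y : ℝ} (h0 : 0 ≤ y) (h1 : y < 1) : HasDerivAt Kf (1 / (1 - y ^ 2)) y := by
  have a : HasDerivAt (fun y : ℝ => 1 + y) 1 y := by simpa using (hasDerivAt_id y).const_add 1
  have b : HasDerivAt (fun y : ℝ => 1 - y) (-1) y := by simpa using (hasDerivAt_id y).const_sub 1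
  have := ((a.log (by linarith)).sub (b.log (by linarith))).div_const 2
  refine this.congr_deriv ?_
  have h2 : (1 - y) ≠ 0 := by linarith
  have h3 : (1 + y) ≠ 0 := by linarith
  rw [show 1 - y ^ 2 = (1 - y) * (1 + y) by ring]
  field_simp
  ring

lemma hM {y : ℝ} (h0 : 0 ≤ y) (h1 : y < 1) : HasDerivAt Mf (- y / (1 - y ^ 2)) y := by
  have a : HasDerivAt (fun y : ℝ => 1 + y) 1 y := by simpa using (hasDerivAt_id y).const_add 1
  have b : HasDerivAt (fun y : ℝ => 1 - y) (-1) y := by simpa using (hasDerivAt_id y).const_sub 1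
  have := ((a.log (by linarith)).add (b.log (by linarith))).div_const 2
  refine this.congr_deriv ?_
  have h2 : (1 - y) ≠ 0 := by linarith
  have h3 : (1 + y) ≠ 0 := by linarith
  rw [show 1 - y ^ 2 = (1 - y) * (1 + y) by ring]
  field_simp
  ring

lemma hJ (c : ℝ) {y : ℝ} (h0 : 0 ≤ y) (h1 : y < 1) :
    HasDerivAt (Jf c) (- y ^ 2 / (1 - y ^ 2)) y := by
  have := (((hasDerivAt_id y).sub_const c).add_const (Kf c)).sub (hK h0 h1)
  refine this.congr_deriv ?_
  have h2 : 1 - y ^ 2 ≠ 0 := by nlinarith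
  field_simp
  ring

lemma hS {y : ℝ} (h0 : 0 ≤ y) (h1 : y < 1) :
    HasDerivAt (fun y : ℝ => Real.sqrt (1 - y ^ 2)) (- y / Real.sqrt (1 - y ^ 2)) y := by
  have h2 : 0 < 1 - y ^ 2 := by nlinarith
  have := (((hasDerivAt_id y).pow 2).const_sub 1).sqrt (by simpa using h2.ne')
  refine this.congr_deriv ?_
  have := Real.sqrt_pos.2 h2
  simp
  field_simp

lemma hP (c u : ℝ) (hu : 0 < u) {y : ℝ} (h0 : 0 ≤ y) (h1 : y < 1) :
    HasDerivAt (Pf c u) (y * (y * u - c * Real.sqrt (1 - y ^ 2)) / (u * (1 - y ^ 2))) y := by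
  have := ((((hS h0 h1).div_const u).sub_const 1).const_mul c).sub (hJ c h0 h1)
  refine this.congr_deriv ?_
  have h2 : 0 < 1 - y ^ 2 := by nlinarith
  have h3 := Real.sqrt_pos.2 h2
  have h4 := Real.sq_sqrt h2.le
  rw [← h4]
  rw [h4]
  set t := Real.sqrt (1 - y ^ 2)
  rw [← h4]
  field_simp
  ring

lemma hQ (c : ℝ) {y : ℝ} (h0 : 0 ≤ y) (h1 : y < 1) :
    HasDerivAt (Qf c) (- (y ^ 2 * (c - y)) / (1 - y ^ 2)) y := by
  have := ((((hJ c h0 h1).const_mul c).sub (hM h0 h1)).add_const (Mf c)).add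
    ((((hasDerivAt_id y).pow 2).const_sub (c ^ 2)).div_const 2)
  refine this.congr_deriv ?_
  have h2 : 1 - y ^ 2 ≠ 0 := by nlinarith
  simp
  field_simp
  ring

section
variable {c u : ℝ} (hu : 0 < u) (hc : 0 ≤ c) (huc : u ^ 2 = 1 - c ^ 2)

lemma Jf_self (c : ℝ) : Jf c c = 0 := by unfold Jf; ring
lemma Pf_self {c u : ℝ} (hu : 0 < u) (huc : u ^ 2 = 1 - c ^ 2) : Pf c u c = 0 := by
  unfold Pf; rw [Jf_self, ← huc, Real.sqrt_sq hu.le, div_self hu.ne']; ring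
lemma Qf_self (c : ℝ) : Qf c c = 0 := by unfold Qf; rw [Jf_self]; ring

/-- comparison of `y u` and `c t` -/
lemma cmp1 {c u y : ℝ} (hu : 0 < u) (hc : 0 ≤ c) (huc : u ^ 2 = 1 - c ^ 2) (hy : 0 ≤ y)
    (hyc : y ≤ c) : y * u ≤ c * Real.sqrt (1 - y ^ 2) := by
  have : u ≤ Real.sqrt (1 - y ^ 2) := Real.le_sqrt_of_sq_le (by nlinarith)
  exact mul_le_mul hyc this hu.le hc

lemma cmp2 {c u y : ℝ} (hu : 0 < u) (hc : 0 ≤ c) (huc : u ^ 2 = 1 - c ^ 2)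
    (hyc : c ≤ y) : c * Real.sqrt (1 - y ^ 2) ≤ y * u := by
  have : Real.sqrt (1 - y ^ 2) ≤ u := by
    rw [← Real.sqrt_sq hu.le]; apply Real.sqrt_le_sqrt; nlinarith
  exact mul_le_mul hyc this (Real.sqrt_nonneg _) (by linarith)

lemma c_lt {c u : ℝ} (hu : 0 < u) (hc : 0 ≤ c) (huc : u ^ 2 = 1 - c ^ 2) : c < 1 := by
  nlinarith [sq_nonneg u, pow_pos hu 2]

lemma P_anti {c u y z : ℝ} (hu : 0 < u) (hc : 0 ≤ c) (huc : u ^ 2 = 1 - c ^ 2) (hz : 0 ≤ z)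
    (hzy : z ≤ y) (hy : y ≤ c) : Pf c u y ≤ Pf c u z := by
  have hc1 := c_lt hu hc huc
  refine ge_of_hd hzy (fun x hx => hP c u hu (hz.trans hx.1) (by linarith [hx.2])) ?_
  intro x hx
  have h0 : 0 ≤ x := hz.trans hx.1
  have h1 : x < 1 := by linarith [hx.2]
  apply div_nonpos_of_nonpos_of_nonneg
  · exact mul_nonpos_of_nonneg_of_nonpos h0 (by linarith [cmp1 hu hc huc h0 (hx.2.trans hy)])
  · exact mul_nonneg hu.le (by nlinarith)

lemma P_nonneg {c u y : ℝ} (hu : 0 < u) (hc : 0 ≤ c) (huc : u ^ 2 = 1 - c ^ 2) (hy : 0 ≤ y)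
    (hy1 : y < 1) : 0 ≤ Pf c u y := by
  rw [← Pf_self hu huc]
  rcases le_total y c with h | h
  · exact P_anti hu hc huc hy h le_rfl
  · refine le_of_hd h (fun x hx => hP c u hu (hc.trans hx.1) (by linarith [hx.2])) ?_
    intro x hx
    have h0 : 0 ≤ x := hc.trans hx.1
    have h1 : x < 1 := by linarith [hx.2]
    apply div_nonneg
    · exact mul_nonneg h0 (by linarith [cmp2 hu hc huc hx.1])
    · exact mul_nonneg hu.le (by nlinarith)

lemma Q_nonneg {c y : ℝ} (hc : 0 ≤ c) (hc1 : c < 1) (hy : 0 ≤ y)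
    (hy1 : y < 1) : 0 ≤ Qf c y := by
  rw [← Qf_self c]
  rcases le_total y c with h | h
  · refine ge_of_hd h (fun x hx => hQ c (hy.trans hx.1) (by linarith [hx.2])) ?_
    intro x hx
    have h0 : 0 ≤ x := hy.trans hx.1
    have h1 : x < 1 := by linarith [hx.2]
    apply div_nonpos_of_nonpos_of_nonneg
    · nlinarith [mul_nonneg (sq_nonneg x) (sub_nonneg.2 hx.2)]
    · nlinarith
  · refine le_of_hd h (fun x hx => hQ c (hc.trans hx.1) (by linarith [hx.2])) ?_
    intro x hx
    have h0 : 0 ≤ x := hc.trans hx.1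
    have h1 : x < 1 := by linarith [hx.2]
    apply div_nonneg
    · nlinarith [mul_nonneg (sq_nonneg x) (sub_nonneg.2 hx.1)]
    · nlinarith
end

def Df (c u m y : ℝ) : ℝ := m ^ 2 / 2 - m * Pf c u y + Qf c y

lemma hD (c u m : ℝ) (hu : 0 < u) {y : ℝ} (h0 : 0 ≤ y) (h1 : y < 1) :
    HasDerivAt (Df c u m)
      (- (y / (1 - y ^ 2)) * (y * (c + m - y) - m * c * Real.sqrt (1 - y ^ 2) / u)) y := by
  have := (((hP c u hu h0 h1).const_mul m).const_sub (m ^ 2 / 2)).add (hQ c h0 h1)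
  refine this.congr_deriv ?_
  have h2 : 1 - y ^ 2 ≠ 0 := by nlinarith
  field_simp
  ring

/-- case `y ≥ c` -/
lemma D_right {c u m y : ℝ} (hu : 0 < u) (hc : 0 ≤ c) (huc : u ^ 2 = 1 - c ^ 2) (hm : 0 ≤ m)
    (hm1 : c + m < 1) (hy : c ≤ y) (hy1 : y < 1) : 0 ≤ Df c u m y := by
  have hc1 := c_lt hu hc huc
  have key : ∀ z, c ≤ z → z ≤ c + m → 0 ≤ Df c u m z := by
    intro z hz hzl
    have hg : Df c u m c + m / (4 * u ^ 2) * (c - c) ^ 2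
        ≤ Df c u m z + m / (4 * u ^ 2) * (z - c) ^ 2 := by
      have hd2 : ∀ x : ℝ, HasDerivAt (fun x : ℝ => m / (4 * u ^ 2) * (x - c) ^ 2)
          (m / (2 * u ^ 2) * (x - c)) x := by
        intro x
        have := ((((hasDerivAt_id x).sub_const c).pow 2).const_mul (m / (4 * u ^ 2)))
        refine this.congr_deriv ?_
        simp
        field_simp
        ring
      refine le_of_hd (f := fun x => Df c u m x + m / (4 * u ^ 2) * (x - c) ^ 2) hz
        (fun x hx => (hD c u m hu (hc.trans hx.1) (by linarith [hx.2])).add (hd2 x)) ?_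
      intro x hx
      have h0 : 0 ≤ x := hc.trans hx.1
      have h1 : x < 1 := by linarith [hx.2]
      have h2 : 0 < 1 - x ^ 2 := by nlinarith
      have h3 := Real.sqrt_pos.2 h2
      have h4 := Real.sq_sqrt h2.le
      have h5 : Real.sqrt (1 - x ^ 2) ≤ u := by
        rw [← Real.sqrt_sq hu.le]; apply Real.sqrt_le_sqrt; nlinarith [hx.1]
      have h6 : (1 - x ^ 2) / u ^ 2 ≤ Real.sqrt (1 - x ^ 2) / u := by
        rw [div_le_div_iff₀ (by positivity) hu]
        nlinarith [mul_nonneg (mul_pos h3 hu).le (sub_nonneg.2 h5)]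
      have h7 : x * (c + m - x) - m * c * Real.sqrt (1 - x ^ 2) / u
          ≤ x * (c + m - x) - m * c * ((1 - x ^ 2) / u ^ 2) := by
        have := mul_le_mul_of_nonneg_left h6 (mul_nonneg hm hc)
        rw [mul_div_assoc]; linarith
      have h8 : x / (1 - x ^ 2) * (x * (c + m - x) - m * c * Real.sqrt (1 - x ^ 2) / u)
          ≤ x / (1 - x ^ 2) * (x * (c + m - x) - m * c * ((1 - x ^ 2) / u ^ 2)) :=
        mul_le_mul_of_nonneg_left h7 (by positivity)
      have h9 : x / (1 - x ^ 2) * (x * (c + m - x) - m * c * ((1 - x ^ 2) / u ^ 2))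
          ≤ m / (2 * u ^ 2) * (x - c) := by
        have e1 : x / (1 - x ^ 2) * (x * (c + m - x) - m * c * ((1 - x ^ 2) / u ^ 2))
          = (x * (x * (c + m - x) * u ^ 2 - m * c * (1 - x ^ 2))) / ((1 - x ^ 2) * u ^ 2) := by
          field_simp
        have e2 : m / (2 * u ^ 2) * (x - c) = (m * (x - c) * (1 - x ^ 2) / 2)
            / ((1 - x ^ 2) * u ^ 2) := by field_simp
        rw [e1, e2]
        apply div_le_div_of_nonneg_right _ (by positivity)
        -- (c+m-x)(1-c) ≤ m(1-x)
        have a1 : (c + m - x) * (1 - c) ≤ m * (1 - x) := by nlinarith [hx.1]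
        have a2 : x ^ 2 * (1 + c) * ((c + m - x) * (1 - c)) ≤ x ^ 2 * (1 + c) * (m * (1 - x)) :=
          mul_le_mul_of_nonneg_left a1 (by positivity)
        have a3 : 0 ≤ m * (x - c) * (1 - x) * (1 - x) := by
          have := hx.1
          exact mul_nonneg (mul_nonneg (mul_nonneg hm (by linarith)) (by linarith)) (by linarith)
        rw [huc]
        nlinarith
      show 0 ≤ _
      linarith
    have e0 : Df c u m c = m ^ 2 / 2 := by unfold Df; rw [Pf_self hu huc, Qf_self]; ring
    rw [e0] at hg
    have b1 : m / (4 * u ^ 2) * (z - c) ^ 2 ≤ m ^ 2 / 4 := by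
      rw [div_mul_eq_mul_div, div_le_div_iff₀ (by positivity) (by norm_num)]
      have b2 : (z - c) ^ 2 ≤ m * u ^ 2 := by
        have : (z - c) ^ 2 ≤ m ^ 2 := by
          apply pow_le_pow_left₀ <;> linarith
        have h3 : m ≤ u ^ 2 := by rw [huc]; nlinarith
        nlinarith [mul_le_mul_of_nonneg_left h3 hm]
      nlinarith [mul_le_mul_of_nonneg_left b2 hm]
    nlinarith [sq_nonneg m]
  rcases le_total y (c + m) with h | h
  · exact key y hy h
  · refine (key (c + m) (by linarith) le_rfl).trans ?_
    refine le_of_hd h (fun x hx => hD c u m hu (by linarith [hx.1]) (by linarith [hx.2])) ?_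
    intro x hx
    have h0 : 0 ≤ x := by linarith [hx.1]
    have h1 : x < 1 := by linarith [hx.2]
    have h2 : 0 < 1 - x ^ 2 := by nlinarith
    have h3 : 0 ≤ m * c * Real.sqrt (1 - x ^ 2) / u := by positivity
    have h4 : x * (c + m - x) ≤ 0 := mul_nonpos_of_nonneg_of_nonpos h0 (by linarith [hx.1])
    have h5 : 0 ≤ x / (1 - x ^ 2) := by positivity
    nlinarith [mul_nonneg h5 (by linarith : 0 ≤ m * c * Real.sqrt (1 - x ^ 2) / u - x * (c + m - x))]

lemma K_lower {c : ℝ} (hc : 0 ≤ c) (hc1 : c < 1) :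
    c + c ^ 3 / 3 + c ^ 5 / 5 + c ^ 7 / 7 ≤ Kf c := by
  have h := Real.sum_range_le_log_div hc hc1 4
  rw [Real.log_div (by linarith) (by linarith)] at h
  simp [Finset.sum_range_succ] at h
  unfold Kf
  norm_num at h
  linarith

lemma Kf_zero : Kf 0 = 0 := by simp [Kf]
lemma Mf_zero : Mf 0 = 0 := by simp [Mf]

lemma P0_eq (c u : ℝ) : Pf c u 0 = c / u - Kf c := by
  simp [Pf, Jf, Kf_zero]; ring
lemma Q0_eq (c : ℝ) : Qf c 0 = c * Kf c + Mf c - c ^ 2 / 2 := by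
  simp [Qf, Jf, Kf_zero, Mf_zero]; ring

lemma Q0_lower {c : ℝ} (hc : 0 ≤ c) (hc1 : c < 1) : c ^ 4 / 12 + c ^ 6 / 30 ≤ Qf c 0 := by
  rw [Q0_eq]
  have := le_of_hd (f := fun x => x * Kf x + Mf x - x ^ 2 / 2 - (x ^ 4 / 12 + x ^ 6 / 30))
    (f' := fun x => Kf x - x - x ^ 3 / 3 - x ^ 5 / 5) hc (fun x hx => by
      have h1 : x < 1 := lt_of_le_of_lt hx.2 hc1
      have := ((((hasDerivAt_id x).mul (hK hx.1 h1)).add (hM hx.1 h1)).sub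
        (((hasDerivAt_id x).pow 2).div_const 2)).sub
        ((((hasDerivAt_id x).pow 4).div_const 12).add (((hasDerivAt_id x).pow 6).div_const 30))
      refine this.congr_deriv ?_
      simp
      ring) (fun x hx => by
      have := K_lower hx.1 (lt_of_le_of_lt hx.2 hc1)
      have h7 : 0 ≤ x ^ 7 := pow_nonneg hx.1 7
      linarith)
  simp [Kf_zero, Mf_zero] at this
  linarith

lemma inv_u {c u : ℝ} (hu : 0 < u) (huc : u ^ 2 = 1 - c ^ 2) {B : ℝ} (hB : 0 ≤ B)
    (h : 1 ≤ (1 - c ^ 2) * B ^ 2) : 1 / u ≤ B := by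
  rw [div_le_iff₀ hu]
  rw [← huc] at h
  by_contra hh
  push Not at hh
  have : 0 ≤ B * u := by positivity
  nlinarith

/-- small `c`: `P₀ ≤ u² c / 2` -/
lemma P0_small {c u : ℝ} (hu : 0 < u) (hc : 0 ≤ c) (huc : u ^ 2 = 1 - c ^ 2)
    (h : c * (1 + c) < 1) : Pf c u 0 ≤ u ^ 2 * c / 2 := by
  have hc1 := c_lt hu hc huc
  rw [P0_eq]
  have hK := K_lower hc hc1
  have hx : c ^ 2 ≤ 2 / 5 := by nlinarith [sq_nonneg (c - 62/100)]
  have h1 : 1 / u ≤ 3 / 2 - c ^ 2 / 6 := by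
    apply inv_u hu huc
    · linarith
    · have h0 : 0 ≤ c ^ 2 := sq_nonneg c
      generalize c ^ 2 = x at hx h0
      nlinarith [mul_nonneg h0 h0, mul_nonneg h0 (sub_nonneg.2 hx)]
  have h2 := mul_le_mul_of_nonneg_left h1 hc
  have h5 : 0 ≤ c ^ 5 := by positivity
  have h7 : 0 ≤ c ^ 7 := by positivity
  rw [huc, div_eq_mul_one_div]
  nlinarith

lemma P0_sq {c u : ℝ} (hu : 0 < u) (hc : 0 ≤ c) (huc : u ^ 2 = 1 - c ^ 2)
    (h : c ≤ 4 / 5) : Pf c u 0 ^ 2 ≤ 2 * Qf c 0 := by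
  have hc1 := c_lt hu hc huc
  have hP0 := P_nonneg hu hc huc (y := 0) le_rfl (by norm_num)
  have hQ0 := Q0_lower hc hc1
  have hK := K_lower hc hc1
  have hx : c ^ 2 ≤ 16 / 25 := by nlinarith
  have h0 : 0 ≤ c ^ 2 := sq_nonneg c
  have h1 : 1 / u ≤ 1 + (1 / 3 + 11 / 20) * c ^ 2 + (c ^ 2) ^ 2 / 5 + (c ^ 2) ^ 3 / 7 := by
    apply inv_u hu huc
    · positivity
    · generalize c ^ 2 = x at hx h0
      have q2 := pow_le_pow_left₀ h0 hx 2
      have q3 := pow_le_pow_left₀ h0 hx 3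
      have q4 := pow_le_pow_left₀ h0 hx 4
      have q5 := pow_le_pow_left₀ h0 hx 5
      have q6 := pow_le_pow_left₀ h0 hx 6
      have q : 0 ≤ 46 / 60 - 587 / 1000 * x - 542 / 1000 * x ^ 2 - 347 / 1000 * x ^ 3
          - 236 / 1000 * x ^ 4 - 37 / 1000 * x ^ 5 - 21 / 1000 * x ^ 6 := by
        norm_num at q2 q3 q4 q5 q6
        linarith
      have q' := mul_nonneg h0 q
      have r2 : 0 ≤ x ^ 2 := by positivity
      have r3 : 0 ≤ x ^ 3 := by positivity
      have r4 : 0 ≤ x ^ 4 := by positivity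
      have r5 : 0 ≤ x ^ 5 := by positivity
      have r6 : 0 ≤ x ^ 6 := by positivity
      have r7 : 0 ≤ x ^ 7 := by positivity
      ring_nf at q' ⊢
      linarith
  have h2 := mul_le_mul_of_nonneg_left h1 hc
  have h3 : Pf c u 0 ≤ 11 / 20 * c ^ 3 := by
    rw [P0_eq, div_eq_mul_one_div]
    nlinarith
  have h4 : Pf c u 0 ^ 2 ≤ (11 / 20 * c ^ 3) ^ 2 := pow_le_pow_left₀ hP0 h3 2
  have h6 : c ^ 6 ≤ 16 / 25 * c ^ 4 := by
    have : 0 ≤ c ^ 4 := by positivity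
    nlinarith
  nlinarith

lemma log_18 : 22 / 25 * (2 / 3) ≤ Real.log (9 / 5) := by
  have h := K_lower (c := 2 / 7) (by norm_num) (by norm_num)
  unfold Kf at h
  rw [← Real.log_div (by norm_num) (by norm_num)] at h
  norm_num at h ⊢
  linarith

lemma V0 {c u : ℝ} (hu : 0 < u) (hc : 4 / 5 ≤ c) (huc : u ^ 2 = 1 - c ^ 2) :
    0 ≤ Qf c 0 - (1 - c) * Pf c u 0 := by
  have hc1 := c_lt hu (by linarith) huc
  have hus : u = Real.sqrt (1 - c ^ 2) := by rw [← huc, Real.sqrt_sq hu.le]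
  have key : Qf c 0 - (1 - c) * Pf c u 0
      = Real.log (1 + c) - c * Real.sqrt (1 - c ^ 2) / (1 + c) - c ^ 2 / 2 := by
    rw [P0_eq, Q0_eq, ← hus]
    have : (1 - c) * (c / u) = c * u / (1 + c) := by
      have : (1 + c) ≠ 0 := by linarith
      field_simp
      rw [huc]; ring
    unfold Kf Mf
    linear_combination -this
  rw [key]
  have hd := le_of_hd (f := fun x => Real.log (1 + x) - x * Real.sqrt (1 - x ^ 2) / (1 + x) - x ^ 2 / 2)
    (f' := fun x => (x ^ 2 + x - 1) / (1 + x) * (1 / Real.sqrt (1 - x ^ 2) - 1)) hc (fun x hx => by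
      have h0 : 0 ≤ x := by linarith [hx.1]
      have h1 : x < 1 := lt_of_le_of_lt hx.2 hc1
      have a : HasDerivAt (fun y : ℝ => 1 + y) 1 x := by simpa using (hasDerivAt_id x).const_add 1
      have := ((a.log (by linarith)).sub
        (((hasDerivAt_id x).mul (hS h0 h1)).div a (by linarith))).sub
        (((hasDerivAt_id x).pow 2).div_const 2)
      refine this.congr_deriv ?_
      have h2 : 0 < 1 - x ^ 2 := by nlinarith
      have h3 := Real.sqrt_pos.2 h2
      have h4 := Real.sq_sqrt h2.le
      simp
      set t := Real.sqrt (1 - x ^ 2)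
      have h5 : 1 + x ≠ 0 := by linarith
      field_simp
      linear_combination (-1) * h4) (fun x hx => by
      have h0 : 4 / 5 ≤ x := hx.1
      have h1 : x < 1 := lt_of_le_of_lt hx.2 hc1
      have h2 : 0 < 1 - x ^ 2 := by nlinarith
      have h3 := Real.sqrt_pos.2 h2
      have h4 : Real.sqrt (1 - x ^ 2) ≤ 1 := Real.sqrt_le_one.2 (by nlinarith)
      apply mul_nonneg
      · apply div_nonneg <;> nlinarith
      · have := (one_le_div h3).2 h4
        linarith)
  refine le_trans ?_ hd
  have e1 : Real.sqrt (1 - (4 / 5 : ℝ) ^ 2) = 3 / 5 := by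
    rw [show (1 - (4 / 5 : ℝ) ^ 2) = (3 / 5) ^ 2 by norm_num]
    exact Real.sqrt_sq (by norm_num)
  simp only [e1]
  have := log_18
  norm_num at this ⊢
  linarith

lemma D_zero {c u m : ℝ} (hu : 0 < u) (hc : 0 ≤ c) (huc : u ^ 2 = 1 - c ^ 2) (hm : 0 ≤ m)
    (hm1 : c + m < 1) : 0 ≤ Df c u m 0 := by
  unfold Df
  have hP0 := P_nonneg hu hc huc (y := 0) le_rfl (by norm_num)
  rcases le_total c (4 / 5) with h | h
  · have := P0_sq hu hc huc h
    nlinarith [sq_nonneg (m - Pf c u 0)]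
  · have := V0 hu h huc
    nlinarith [mul_nonneg (by linarith : 0 ≤ 1 - c - m) hP0, sq_nonneg m]

/-- single crossing -/
lemma cross {c u m y z : ℝ} (hu : 0 < u) (huc : u ^ 2 = 1 - c ^ 2) (hm : 0 ≤ m)
    (hmc : m ≤ u ^ 2 * c) (hy : 0 < y) (hyz : y ≤ z) (hzc : z ≤ c)
    (h : 0 ≤ y * (c + m - y) - m * c * Real.sqrt (1 - y ^ 2) / u) :
    0 ≤ z * (c + m - z) - m * c * Real.sqrt (1 - z ^ 2) / u := by
  have hc : 0 < c := by linarith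
  have hc1 := c_lt hu hc.le huc
  -- general identity
  have gen : ∀ x, 0 < x → x ≤ c →
      (x * (c + m - x) - m * c * Real.sqrt (1 - x ^ 2) / u) * (u * (c * Real.sqrt (1 - x ^ 2) + u * x))
      = (c - x) * x * (u * (c * Real.sqrt (1 - x ^ 2) + u * x) - m * (1 + c / x)) := by
    intro x hx hxc
    have h2 : 0 ≤ 1 - x ^ 2 := by nlinarith
    have h4 := Real.sq_sqrt h2
    set t := Real.sqrt (1 - x ^ 2)
    field_simp
    linear_combination (-m * c ^ 2) * h4 + (m * x ^ 2) * huc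
  have hz : 0 < z := by linarith
  rcases eq_or_lt_of_le hyz with rfl | hyz'
  · exact h
  have hycl : y < c := by linarith
  have ty : 0 < 1 - y ^ 2 := by nlinarith
  have tz : 0 < 1 - z ^ 2 := by nlinarith
  have sy := Real.sqrt_pos.2 ty
  have sz := Real.sqrt_pos.2 tz
  have g1 := gen y hy hycl.le
  have g2 := gen z hz hzc
  have py : 0 < u * (c * Real.sqrt (1 - y ^ 2) + u * y) := by positivity
  have pz : 0 < u * (c * Real.sqrt (1 - z ^ 2) + u * z) := by positivity
  have f1 : 0 ≤ u * (c * Real.sqrt (1 - y ^ 2) + u * y) - m * (1 + c / y) := by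
    have h1 := mul_nonneg h py.le
    rw [g1] at h1
    exact nonneg_of_mul_nonneg_right h1 (mul_pos (by linarith) hy)
  have f2 : 0 ≤ u * (c * Real.sqrt (1 - z ^ 2) + u * z) - m * (1 + c / z) := by
    obtain ⟨s, hs0, hs1, hs⟩ : ∃ s : ℝ, 0 ≤ s ∧ s ≤ 1 ∧ z = (1 - s) * y + s * c := by
      have hp : 0 < c - y := by linarith
      refine ⟨(z - y) / (c - y), div_nonneg (by linarith) hp.le,
        (div_le_one hp).2 (by linarith), ?_⟩
      field_simp
      ring
    have c1 : (1 - s) * Real.sqrt (1 - y ^ 2) + s * u ≤ Real.sqrt (1 - z ^ 2) := by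
      apply Real.le_sqrt_of_sq_le
      have h4 := Real.sq_sqrt ty.le
      set t := Real.sqrt (1 - y ^ 2)
      have hss : 0 ≤ s * (1 - s) := mul_nonneg hs0 (by linarith)
      have e : 1 - z ^ 2 - ((1 - s) * t + s * u) ^ 2
        = s * (1 - s) * ((t - u) ^ 2 + (y - c) ^ 2) := by
        rw [hs]
        linear_combination (-(1 - s)) * h4 - s * huc
      have := mul_nonneg hss (add_nonneg (sq_nonneg (t - u)) (sq_nonneg (y - c)))
      linarith
    have c2 : c / z ≤ (1 - s) * (c / y) + s := by
      rw [div_le_iff₀ hz]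
      have e : ((1 - s) * (c / y) + s) * z - c = s * (1 - s) * (c - y) ^ 2 / y := by
        rw [hs]; field_simp; ring
      have : 0 ≤ s * (1 - s) * (c - y) ^ 2 / y := by
        have : 0 ≤ 1 - s := by linarith
        positivity
      linarith
    have c3 := mul_le_mul_of_nonneg_left c1 (mul_pos hu hc).le
    have c4 := mul_le_mul_of_nonneg_left c2 hm
    have c5 := mul_nonneg (by linarith : 0 ≤ 1 - s) f1
    have c6 := mul_nonneg hs0 (sub_nonneg.2 hmc)
    have e : u * u * z = (1 - s) * (u * u * y) + s * (u * u * c) := by rw [hs]; ring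
    nlinarith
  have h2 : 0 ≤ (c - z) * z * (u * (c * Real.sqrt (1 - z ^ 2) + u * z) - m * (1 + c / z)) :=
    mul_nonneg (mul_nonneg (by linarith) hz.le) f2
  rw [← g2] at h2
  exact nonneg_of_mul_nonneg_left h2 pz

lemma D_left {c u m y : ℝ} (hu : 0 < u) (hc : 0 ≤ c) (huc : u ^ 2 = 1 - c ^ 2) (hm : 0 ≤ m)
    (hm1 : c + m < 1) (hy : 0 ≤ y) (hyc : y ≤ c) : 0 ≤ Df c u m y := by
  have hc1 := c_lt hu hc huc
  have hQ0 := Q_nonneg hc hc1 hy (by linarith)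
  have e0 : Df c u m c = m ^ 2 / 2 := by unfold Df; rw [Pf_self hu huc, Qf_self]; ring
  rcases lt_or_ge (u ^ 2 * c) m with hmc | hmc
  · have h1 : c * (1 + c) < 1 := by
      rw [huc] at hmc
      by_contra hh
      push Not at hh
      nlinarith
    have h2 := P0_small hu hc huc h1
    have h3 := P_anti hu hc huc le_rfl hy hyc
    have h4 : Pf c u y ≤ m / 2 := by linarith
    unfold Df
    nlinarith [mul_le_mul_of_nonneg_left h4 hm]
  · rcases eq_or_lt_of_le hy with rfl | hy0
    · exact D_zero hu hc huc hm hm1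
    by_cases h : 0 ≤ y * (c + m - y) - m * c * Real.sqrt (1 - y ^ 2) / u
    · have : Df c u m c ≤ Df c u m y := by
        refine ge_of_hd hyc (fun x hx => hD c u m hu (by linarith [hx.1]) (by linarith [hx.2])) ?_
        intro x hx
        have h0 : 0 < x := by linarith [hx.1]
        have h2 : 0 < 1 - x ^ 2 := by nlinarith [hx.2]
        have := mul_nonneg (by positivity : 0 ≤ x / (1 - x ^ 2))
          (cross hu huc hm hmc hy0 hx.1 hx.2 h)
        linarith
      rw [e0] at this
      nlinarith [sq_nonneg m]
    · refine (D_zero hu hc huc hm hm1).trans ?_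
      refine le_of_hd hy (fun x hx => hD c u m hu hx.1 (by linarith [hx.2])) ?_
      intro x hx
      have h2 : 0 < 1 - x ^ 2 := by nlinarith [hx.1, hx.2]
      rcases eq_or_lt_of_le hx.1 with h0 | h0
      · rw [← h0]; simp
      · have h3 : x * (c + m - x) - m * c * Real.sqrt (1 - x ^ 2) / u ≤ 0 := by
          by_contra hh
          push Not at hh
          exact h (cross hu huc hm hmc h0 hx.2 hyc hh.le)
        have := mul_nonneg (by positivity : 0 ≤ x / (1 - x ^ 2)) (neg_nonneg.2 h3)
        linarith

lemma D_nonneg {c u m y : ℝ} (hu : 0 < u) (hc : 0 ≤ c) (huc : u ^ 2 = 1 - c ^ 2)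
    (hm1 : c + m < 1) (hy : 0 ≤ y) (hy1 : y < 1) : 0 ≤ Df c u m y := by
  have hc1 := c_lt hu hc huc
  rcases le_total 0 m with hm | hm
  · rcases le_total y c with h | h
    · exact D_left hu hc huc hm hm1 hy h
    · exact D_right hu hc huc hm hm1 h hy1
  · unfold Df
    have h1 := Q_nonneg hc hc1 hy hy1
    have h2 := P_nonneg hu hc huc hy hy1
    nlinarith [sq_nonneg m, mul_nonneg (neg_nonneg.2 hm) h2]

lemma DR_zero (d : ℕ) (lam : ℝ) (x : Euc d) : DR d lam x 0 = x 0 / ‖x‖ := by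
  simp [DR, e]
  apply Finset.sum_eq_zero
  intro j hj
  have hj2 : 2 ≤ (j : ℕ) := by simpa using hj
  have : (0 : Fin (d + 2)) ≠ j := by
    rintro rfl
    simp at hj2
  simp [Pi.single_apply, this]

lemma DR_sub (d : ℕ) (lam : ℝ) (x : Euc d) :
    DR d lam x - lam • e d 1 = (1 - 1 / ‖x‖) • x + ((2 / ‖x‖ - 1) * x 0) • e d 0 := by
  ext j
  simp only [DR, e, PiLp.sub_apply, PiLp.add_apply, PiLp.smul_apply, WithLp.ofLp_sum,
    Finset.sum_apply, EuclideanSpace.single_apply, smul_eq_mul, mul_ite, mul_one, mul_zero,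
    Finset.sum_ite_eq, Finset.mem_filter, Finset.mem_univ, true_and]
  by_cases h0 : j = 0
  · subst h0
    simp
    ring
  · by_cases h1 : j = 1
    · subst h1
      simp
    · have : 2 ≤ (j : ℕ) := by
        have a : (j : ℕ) ≠ 0 := fun h => h0 (Fin.ext h)
        have b : (j : ℕ) ≠ 1 := fun h => h1 (Fin.ext (by simpa using h))
        omega
      simp [h0, h1, this]

lemma two_coord (d : ℕ) (x : Euc d) : x 0 ^ 2 + x 1 ^ 2 ≤ ‖x‖ ^ 2 := by
  rw [EuclideanSpace.real_norm_sq_eq, Fin.sum_univ_succ, Fin.sum_univ_succ]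
  have : 0 ≤ ∑ i : Fin d, x i.succ.succ ^ 2 := Finset.sum_nonneg fun i _ => sq_nonneg _
  simp at this ⊢
  linarith

lemma norm_e (d : ℕ) (j : Fin (d + 2)) : ‖e d j‖ = 1 := by simp [e]
lemma inner_e (d : ℕ) (j : Fin (d + 2)) (x : Euc d) : inner ℝ x (e d j) = x j := by
  unfold e
  rw [EuclideanSpace.inner_single_right]
  simp

lemma norm_sub_e (d : ℕ) (lam : ℝ) (x : Euc d) :
    ‖x - lam • e d 1‖ ^ 2 = ‖x‖ ^ 2 - 2 * lam * x 1 + lam ^ 2 := by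
  rw [norm_sub_sq_real, inner_smul_right, inner_e, norm_smul, norm_e]
  simp
  ring

lemma norm_DR (d : ℕ) (lam : ℝ) (x : Euc d) (hx : ‖x‖ ≠ 0) :
    ‖DR d lam x - lam • e d 1‖ ^ 2
      = (x 0 / ‖x‖) ^ 2 + (‖x‖ - 1) ^ 2 * (1 - (x 0 / ‖x‖) ^ 2) := by
  rw [DR_sub, norm_add_sq_real, inner_smul_right, real_inner_smul_left, inner_e, norm_smul,
    norm_smul, norm_e, mul_pow, mul_pow, Real.norm_eq_abs, Real.norm_eq_abs, sq_abs, sq_abs]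
  field_simp
  ring

lemma main_ineq {a r b lam : ℝ} (ha : 0 < a) (ha1 : a ≤ 1) (hr : 0 < r)
    (hb : a ^ 2 + b ^ 2 ≤ r ^ 2) (h0 : 0 ≤ lam) (h1 : lam < 1) :
    (1 / 2) * ((a / r) ^ 2 + (r - 1) ^ 2 * (1 - (a / r) ^ 2))
      - lam * Real.log (1 + Real.sqrt (1 - (a / r) ^ 2))
      + lam * Real.sqrt (1 - (a / r) ^ 2) + (lam - 1) * Real.log (a / r)
    ≤ (1 / 2) * (r ^ 2 - 2 * lam * b + lam ^ 2) - lam * Real.log (1 + Real.sqrt (1 - a ^ 2))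
      + lam * Real.sqrt (1 - a ^ 2) + (lam - 1) * Real.log a := by
  obtain ⟨u, hu⟩ : ∃ u, u = a / r := ⟨_, rfl⟩
  have hu0 : 0 < u := by rw [hu]; positivity
  have har : a = u * r := by rw [hu]; field_simp
  rw [← hu]
  have hu1 : 0 ≤ 1 - u ^ 2 := by
    have : u ≤ 1 := by
      rw [hu, div_le_one hr]
      exact abs_le_of_sq_le_sq' (by nlinarith [sq_nonneg b]) hr.le |>.2
    nlinarith
  have hy0 : 0 ≤ 1 - a ^ 2 := by nlinarith
  have hcs := Real.sq_sqrt hu1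
  have hys := Real.sq_sqrt hy0
  have hc := Real.sqrt_nonneg (1 - u ^ 2)
  have hy := Real.sqrt_nonneg (1 - a ^ 2)
  set c := Real.sqrt (1 - u ^ 2)
  set y := Real.sqrt (1 - a ^ 2)
  have huc : u ^ 2 = 1 - c ^ 2 := by linarith
  have hc1 := c_lt hu0 hc huc
  have hay : a ^ 2 = 1 - y ^ 2 := by linarith
  have hy1 := c_lt ha hy hay
  have hD := D_nonneg (c := c) (u := u) (m := lam - c) (y := y) hu0 hc huc (by linarith) hy hy1
  have hbc : b ≤ r * c := by
    have : b ^ 2 ≤ (r * c) ^ 2 := by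
      rw [mul_pow, hcs]; rw [har] at hb; nlinarith
    exact (abs_le_of_sq_le_sq' this (by positivity)).2
  have hlb := mul_le_mul_of_nonneg_left hbc h0
  have hMu : ∀ v w : ℝ, 0 < v → 0 ≤ w → w < 1 → v ^ 2 = 1 - w ^ 2 → Mf w = Real.log v := by
    intro v w hv hw hw1 h
    unfold Mf
    rw [← Real.log_mul (by linarith) (by linarith), show (1 + w) * (1 - w) = v ^ 2 by rw [h]; ring,
      Real.log_pow]
    push_cast; ring
  have m1 := hMu u c hu0 hc hc1 huc
  have m2 := hMu a y ha hy hy1 hay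
  have k : ∀ w, Kf w = Real.log (1 + w) - Mf w := by intro w; unfold Kf Mf; ring
  have hra : a / u = r := by rw [har]; field_simp
  unfold Df Pf Qf Jf at hD
  rw [k, k, m1, m2, ← hay, Real.sqrt_sq ha.le, hra] at hD
  have e1 : u ^ 2 * r ^ 2 = 1 - y ^ 2 := by rw [← hay, har]; ring
  have e2 : r * u ^ 2 = r * (1 - c ^ 2) := by rw [huc]
  nlinarith

/-- For `λ ∈ [0,1)`, `F(T x) ≤ F(x)` for every `x ∈ Δ`
(note `T x ∈ Δ` whenever `x ∈ Δ`). -/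
theorem stmt4 (d : ℕ) (lam : ℝ) (h0 : 0 ≤ lam) (h1 : lam < 1) :
    ∀ x ∈ Delta d, F d lam (DR d lam x) ≤ F d lam x := by
  intro x hx
  obtain ⟨ha, ha1⟩ := hx
  have hb := two_coord d x
  have hr : 0 < ‖x‖ := by
    rw [norm_pos_iff]
    rintro rfl
    simp at ha
  unfold F
  rw [norm_DR d lam x hr.ne', DR_zero, norm_sub_e]
  exact main_ineq ha ha1 hr hb h0 h1
end
end

section
/- Let d ≥ 2 and λ ∈ [0,1). Define F : Δ → ℝ by F(x) = ½‖x − λe₂‖² − λ log(1 + √(1 − x₁²)) + λ√(1 − x₁²) + (λ−1) log x₁, T x = (x₁/‖x‖) e₁ + ((1 − 1/‖x‖) x₂ + λ) e₂ + (1 − 1/‖x‖) ∑_{j=3}^d x_j e_j, and x* = √(1−λ²) e₁ + λ e₂. Then for every t > 0 there exists c > 0 such that F(x) − F(T x) ≥ c for every x ∈ Δ with ‖x − x*‖ ≥ t; i.e., sup_{x ∈ Δ \ B(x*,t)} [F(T x) − F(x)] < 0. -/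
noncomputable section

open Metric Set Filter

namespace DRaux
open Real

lemma mono {f f' : ℝ → ℝ} {x y : ℝ} (hxy : x ≤ y)
    (hd : ∀ s, x ≤ s → s ≤ y → HasDerivAt f (f' s) s)
    (hp : ∀ s, x ≤ s → s ≤ y → 0 ≤ f' s) : f x ≤ f y := by
  have : MonotoneOn f (Set.Icc x y) := by
    apply monotoneOn_of_deriv_nonneg (convex_Icc x y)
    · intro s hs; exact (hd s hs.1 hs.2).continuousAt.continuousWithinAt
    · intro s hs
      have := interior_subset hs
      exact (hd s this.1 this.2).differentiableAt.differentiableWithinAt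
    · intro s hs
      have := interior_subset hs
      rw [(hd s this.1 this.2).deriv]; exact hp s this.1 this.2
  exact this ⟨le_refl _, hxy⟩ ⟨hxy, le_refl _⟩ hxy

lemma anti {f f' : ℝ → ℝ} {x y : ℝ} (hxy : x ≤ y)
    (hd : ∀ s, x ≤ s → s ≤ y → HasDerivAt f (f' s) s)
    (hp : ∀ s, x ≤ s → s ≤ y → f' s ≤ 0) : f y ≤ f x := by
  have := mono (f := fun s => - f s) (f' := fun s => - f' s) hxy
    (fun s h h' => (hd s h h').neg) (fun s h h' => by linarith [hp s h h'])
  linarith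

def H (l w : ℝ) : ℝ := (1 - w^2)/2 - l * log (1+w) + l * w
  + (l-1) * ((log (1-w) + log (1+w))/2)

lemma H_deriv (l s : ℝ) (h0 : 0 ≤ s) (h1 : s < 1) :
    HasDerivAt (H l) (s^2*(s-l)/(1-s^2)) s := by
  have a1 : (1:ℝ) + s ≠ 0 := by linarith
  have a2 : (1:ℝ) - s ≠ 0 := by linarith
  have a3 : (1:ℝ) - s^2 ≠ 0 := by nlinarith
  have hid := hasDerivAt_id' s
  have e1 := (hid.const_add 1).log a1
  have e2 := (hid.const_sub 1).log a2
  have e3 := ((hid.pow 2).const_sub 1).div_const 2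
  have := ((e3.sub (e1.const_mul l)).add (hid.const_mul l)).add
    (((e2.add e1).div_const 2).const_mul (l-1))
  refine (this.congr_deriv ?_)
  have : (1:ℝ) - s^2 = (1-s)*(1+s) := by ring
  rw [this]
  field_simp
  push_cast
  ring

lemma H_lower (l w : ℝ) (l0 : 0 ≤ l) (l1 : l < 1) (h0 : 0 ≤ w) (h1 : w < 1) :
    (w-l)^4/24 ≤ H l w - H l l := by
  have key : ∀ s, 0 ≤ s → s < 1 → HasDerivAt (fun s => H l s - (s^4/4 - l*s^3/3))
      (s^2*(s-l) * (s^2/(1-s^2))) s := by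
    intro s hs hs'
    have a3 : (1:ℝ) - s^2 ≠ 0 := by nlinarith
    have hid := hasDerivAt_id' s
    have := (H_deriv l s hs hs').sub (((hid.pow 4).div_const 4).sub
      (((hid.pow 3).const_mul l).div_const 3))
    refine this.congr_deriv ?_
    field_simp
    push_cast
    ring
  have pos : ∀ s : ℝ, 0 ≤ s → s < 1 → 0 ≤ s^2/(1-s^2) := by
    intro s hs hs'
    have : 0 < 1 - s^2 := by nlinarith
    positivity
  have poly : (w-l)^4/24 ≤ (w^4/4 - l*w^3/3) - (l^4/4 - l*l^3/3) := by
    have : (w^4/4 - l*w^3/3) - (l^4/4 - l*l^3/3) - (w-l)^4/24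
      = (w-l)^2 * (5*w^2+6*l*w+l^2)/24 := by ring
    have : 0 ≤ (w-l)^2 * (5*w^2+6*l*w+l^2)/24 := by positivity
    linarith
  rcases le_total l w with h | h
  · have := mono h (fun s a b => key s (by linarith) (by linarith)) (fun s a b =>
      mul_nonneg (mul_nonneg (sq_nonneg s) (by linarith)) (pos s (by linarith) (by linarith)))
    linarith
  · have := anti h (fun s a b => key s (by linarith) (by linarith)) (fun s a b =>
      mul_nonpos_of_nonpos_of_nonneg (mul_nonpos_of_nonneg_of_nonpos (sq_nonneg s) (by linarith))
       (pos s (by linarith) (by linarith)))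
    linarith

def phi (l v w : ℝ) : ℝ := v*(v-l)*√(1-w^2)/√(1-v^2) + H l w - H l v + l^2/2 - v^2/2

lemma sq_pos' {s : ℝ} (h0 : 0 ≤ s) (h1 : s < 1) : 0 < 1 - s^2 := by nlinarith

lemma phi_deriv (l v s : ℝ) (h0 : 0 ≤ s) (h1 : s < 1) :
    HasDerivAt (phi l v) (s/√(1-s^2) * (s*(s-l)/√(1-s^2) - v*(v-l)/√(1-v^2))) s := by
  have a3 := sq_pos' h0 h1
  have hid := hasDerivAt_id' s
  have e1 := ((hid.pow 2).const_sub 1).sqrt a3.ne'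
  have := ((((((e1.const_mul (v*(v-l))).div_const (√(1-v^2))).add (H_deriv l s h0 h1)).sub_const
    (H l v)).add_const (l^2/2)).sub_const (v^2/2))
  refine this.congr_deriv ?_
  have b : 0 < √(1-s^2) := sqrt_pos.2 a3
  have bb : 1 - s^2 = √(1-s^2)^2 := (sq_sqrt a3.le).symm
  generalize √(1-s^2) = q at *
  rw [bb]
  by_cases hv : √(1-v^2) = 0
  · rw [hv]; simp; field_simp
  field_simp
  push_cast
  ring

lemma phi_self (l v : ℝ) (h0 : 0 ≤ v) (h1 : v < 1) : phi l v v = (v-l)^2/2 := by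
  have b : 0 < √(1-v^2) := sqrt_pos.2 (sq_pos' h0 h1)
  unfold phi
  field_simp
  ring

/-- `s/√(1-s²)` monotone type comparison. -/
lemma sqrt_anti {s v : ℝ} (h0 : 0 ≤ s) (h : s ≤ v) : √(1-v^2) ≤ √(1-s^2) :=
  sqrt_le_sqrt (by nlinarith)

lemma case1 (l v w : ℝ) (l0 : 0 ≤ l) (hv : v < 1) (h0 : 0 ≤ w) (h1 : w < 1)
    (hlv : l ≤ v) : (v-l)^2/2 ≤ phi l v w := by
  have v0 : 0 ≤ v := by linarith
  rw [← phi_self l v v0 hv]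
  have kk : ∀ s t, l ≤ s → s ≤ t → t < 1 → s*(s-l)/√(1-s^2) ≤ t*(t-l)/√(1-t^2) := by
    intro s t h h' h''
    have := sqrt_anti (s := s) (v := t) (by linarith) h'
    have b : 0 < √(1-t^2) := sqrt_pos.2 (sq_pos' (by linarith) h'')
    apply div_le_div₀ _ _ b this
    · exact mul_nonneg (by linarith) (by linarith)
    · exact mul_le_mul h' (by linarith) (by linarith) (by linarith)
  rcases le_total v w with h | h
  · refine mono h (fun s a b => phi_deriv l v s (by linarith) (by linarith)) (fun s a b => ?_)
    have := kk v s hlv a (by linarith)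
    exact mul_nonneg (div_nonneg (by linarith) (sqrt_nonneg _)) (by linarith)
  · refine anti h (fun s a b => phi_deriv l v s (by linarith) (by linarith)) (fun s a b => ?_)
    have : s*(s-l)/√(1-s^2) ≤ v*(v-l)/√(1-v^2) := by
      rcases le_total l s with hh | hh
      · exact kk s v hh b hv
      · have p1 : s*(s-l)/√(1-s^2) ≤ 0 := div_nonpos_of_nonpos_of_nonneg
          (mul_nonpos_of_nonneg_of_nonpos (by linarith) (by linarith)) (sqrt_nonneg _)
        have p2 : 0 ≤ v*(v-l)/√(1-v^2) := div_nonneg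
          (mul_nonneg (by linarith) (by linarith)) (sqrt_nonneg _)
        linarith
    exact mul_nonpos_of_nonneg_of_nonpos (div_nonneg (by linarith) (sqrt_nonneg _)) (by linarith)

lemma ratio {s v : ℝ} (h0 : 0 ≤ v) (h : v ≤ s) (h1 : s < 1) :
    (1-s) * √(1-v^2) ≤ (1-v) * √(1-s^2) := by
  apply le_of_sq_le_sq _ (mul_nonneg (by linarith) (sqrt_nonneg _))
  rw [mul_pow, mul_pow, sq_sqrt (sq_pos' h0 (by linarith)).le, sq_sqrt (sq_pos' (by linarith) h1).le]
  have : (1-v)^2*(1-s^2) - (1-s)^2*(1-v^2) = 2*((1-v)*(1-s))*(s-v) := by ring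
  have : 0 ≤ 2*((1-v)*(1-s))*(s-v) :=
    mul_nonneg (mul_nonneg (by norm_num) (mul_nonneg (by linarith) (by linarith))) (by linarith)
  linarith

lemma case2a (l v w : ℝ) (l1 : l < 1) (v0 : 0 ≤ v) (hvw : v ≤ w) (hwl : w ≤ l) :
    (v-l)^2/4 ≤ phi l v w := by
  have key : ∀ s, v ≤ s → s ≤ w → HasDerivAt (fun s => phi l v s + (s-v)^2/4)
      (s/√(1-s^2) * (s*(s-l)/√(1-s^2) - v*(v-l)/√(1-v^2)) + (s-v)/2) s := by
    intro s a b
    have := (phi_deriv l v s (by linarith) (by linarith)).add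
      ((((hasDerivAt_id' s).sub_const v).pow 2).div_const 4)
    refine this.congr_deriv ?_
    push_cast
    ring
  have := mono hvw key ?_
  · simp only [phi_self l v v0 (by linarith)] at this
    nlinarith
  intro s a b
  have A := sq_pos' (s := s) (by linarith) (by linarith)
  have U := sq_pos' (s := v) (by linarith) (by linarith)
  have R := ratio v0 a (by linarith)
  have AU := sqrt_anti v0 a
  have bA : 0 < √(1-s^2) := sqrt_pos.2 A
  have bU : 0 < √(1-v^2) := sqrt_pos.2 U
  have AA : √(1-s^2)^2 = 1 - s^2 := sq_sqrt A.le
  generalize √(1-s^2) = p at *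
  generalize √(1-v^2) = q at *
  -- goal
  have e1 : s/p * (s*(s-l)/p - v*(v-l)/q) + (s-v)/2
     = (s*v*(l-v)*(p/q) - s^2*(l-s) + (s-v)*(1-s^2)/2)/p^2 := by
    rw [← AA]
    field_simp
    ring
  rw [e1]
  apply div_nonneg _ (sq_nonneg _)
  have r1 : (1-s)/(1-v) ≤ p/q := by
    rw [div_le_div_iff₀ (by linarith) bU]; linarith
  have r2 : p/q ≤ 1 := by rw [div_le_one bU]; exact AU
  generalize p/q = ρ at *
  have r3 : 1 - s ≤ ρ*(1-v) := by rwa [div_le_iff₀ (by linarith)] at r1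
  have s0 : 0 ≤ s := by linarith
  -- replace l by 1
  have i1 : 0 ≤ s*(s - v*ρ)*(1-l) := by
    apply mul_nonneg (mul_nonneg s0 _) (by linarith)
    nlinarith
  have i2 : 0 ≤ s*v*(ρ*(1-v) - (1-s)) := mul_nonneg (mul_nonneg s0 v0) (by linarith)
  have i3 : 0 ≤ (1-s)*((s-v)*(1-s)/2) := mul_nonneg (by linarith) (div_nonneg (mul_nonneg (by linarith) (by linarith)) (by norm_num))
  nlinarith

lemma case2 (l v w : ℝ) (l1 : l < 1) (v0 : 0 ≤ v) (hvl : v ≤ l) (hvw : v ≤ w) (h1 : w < 1) :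
    (v-l)^2/4 ≤ phi l v w := by
  rcases le_total w l with h | h
  · exact case2a l v w l1 v0 hvw h
  · refine (case2a l v l l1 v0 hvl le_rfl).trans ?_
    refine mono h (fun s a b => phi_deriv l v s (by linarith) (by linarith)) (fun s a b => ?_)
    have p1 : 0 ≤ s*(s-l)/√(1-s^2) := div_nonneg
          (mul_nonneg (by linarith) (by linarith)) (sqrt_nonneg _)
    have p2 : v*(v-l)/√(1-v^2) ≤ 0 := div_nonpos_of_nonpos_of_nonneg
          (mul_nonpos_of_nonneg_of_nonpos (by linarith) (by linarith)) (sqrt_nonneg _)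
    exact mul_nonneg (div_nonneg (by linarith) (sqrt_nonneg _)) (by linarith)

def m (l s : ℝ) : ℝ := s*(s-l)/√(1-s^2)

lemma m_deriv (l s : ℝ) (h0 : 0 ≤ s) (h1 : s < 1) :
    HasDerivAt (m l) (-(s^3-2*s+l)/√(1-s^2)^3) s := by
  have a3 := sq_pos' h0 h1
  have hid := hasDerivAt_id' s
  have e1 := ((hid.pow 2).const_sub 1).sqrt a3.ne'
  have b : 0 < √(1-s^2) := sqrt_pos.2 a3
  have := (hid.mul (hid.sub_const l)).div e1 b.ne'
  refine this.congr_deriv ?_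
  have bb : √(1-s^2)^2 = 1 - s^2 := (sq_sqrt a3.le)
  simp only [Pi.mul_apply, Pi.pow_apply]
  generalize √(1-s^2) = q at *
  field_simp
  rw [bb]
  push_cast
  ring

lemma p_down {l s t : ℝ} (l1 : l < 1) (s0 : 0 ≤ s) (st : s ≤ t) (tl : t ≤ l)
    (h : s^3-2*s+l ≤ 0) : t^3-2*t+l ≤ 0 := by
  have hl : l^3 - 2*l + l ≤ 0 := by
    have : l^3 - 2*l+l = -(l*((1-l)*(1+l))) := by ring
    have : 0 ≤ l*((1-l)*(1+l)) := mul_nonneg (by linarith) (mul_nonneg (by linarith) (by linarith))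
    linarith
  rcases eq_or_lt_of_le (st.trans tl) with e | e
  · have : t = l := by linarith
    rw [this]; exact hl
  have id : (l-s)*(t^3-2*t+l) = (l-t)*(s^3-2*s+l) + (t-s)*(l^3-2*l+l)
     - (l-t)*(t-s)*(l-s)*(s+t+l) := by ring
  have i1 : (l-t)*(s^3-2*s+l) ≤ 0 := mul_nonpos_of_nonneg_of_nonpos (by linarith) h
  have i2 : (t-s)*(l^3-2*l+l) ≤ 0 := mul_nonpos_of_nonneg_of_nonpos (by linarith) hl
  have i3 : 0 ≤ (l-t)*(t-s)*(l-s)*(s+t+l) := mul_nonneg (mul_nonneg (mul_nonneg (by linarith)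
    (by linarith)) (by linarith)) (by linarith)
  by_contra hc
  push Not at hc
  have := mul_pos (sub_pos.2 e) hc
  linarith

/-- if `p ≤ 0` at `s` then `m` increases on `[s,t]`. -/
lemma m_up {l s t : ℝ} (l1 : l < 1) (s0 : 0 ≤ s) (st : s ≤ t) (tl : t ≤ l)
    (h : s^3-2*s+l ≤ 0) : m l s ≤ m l t := by
  refine mono st (fun x a b => m_deriv l x (by linarith) (by linarith)) (fun x a b => ?_)
  have := p_down l1 s0 a (by linarith) h
  exact div_nonneg (by linarith) (pow_nonneg (sqrt_nonneg _) _)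

lemma m_dn {l s t : ℝ} (l1 : l < 1) (s0 : 0 ≤ s) (st : s ≤ t) (tl : t ≤ l)
    (h : 0 < t^3-2*t+l) : m l t ≤ m l s := by
  refine anti st (fun x a b => m_deriv l x (by linarith) (by linarith)) (fun x a b => ?_)
  have : 0 ≤ x^3-2*x+l := by
    by_contra hc
    push Not at hc
    linarith [p_down l1 (by linarith) b tl hc.le]
  exact div_nonpos_of_nonpos_of_nonneg (by linarith) (pow_nonneg (sqrt_nonneg _) _)

lemma case3 (l v w : ℝ) (l1 : l < 1) (h0 : 0 ≤ w) (hwv : w ≤ v) (hvl : v ≤ l) :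
    (v-l)^2/2 ≤ phi l v w ∨ phi l v 0 ≤ phi l v w := by
  rcases le_or_gt (m l w) (m l v) with hm | hm
  · left
    rw [← phi_self l v (by linarith) (by linarith)]
    refine anti hwv (fun s a b => phi_deriv l v s (by linarith) (by linarith)) (fun s a b => ?_)
    have : m l s ≤ m l v := by
      rcases le_or_gt (s^3-2*s+l) 0 with h | h
      · exact m_up l1 (by linarith) b hvl h
      · exact (m_dn l1 h0 a (by linarith) h).trans hm
    unfold m at this
    exact mul_nonpos_of_nonneg_of_nonpos (div_nonneg (by linarith) (sqrt_nonneg _)) (by linarith)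
  · right
    refine mono h0 (fun s a b => phi_deriv l v s (by linarith) (by linarith)) (fun s a b => ?_)
    have : m l v ≤ m l s := by
      rcases le_or_gt (w^3-2*w+l) 0 with h | h
      · linarith [m_up l1 (by linarith) hwv hvl h]
      · linarith [(m_dn l1 a b (by linarith) h)]
    unfold m at this
    exact mul_nonneg (div_nonneg (by linarith) (sqrt_nonneg _)) (by linarith)


lemma H_poly (l v : ℝ) (l1 : l < 1) (v0 : 0 ≤ v) (hvl : v ≤ l) :
    l*v^3/3 - v^4/4 + l*v^5/5 - v^6/6 + l*v^7/7 - v^8/8 ≤ H l 0 - H l v := by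
  have key : ∀ s, 0 ≤ s → s < 1 → HasDerivAt
      (fun s => H l s + (l*s^3/3 - s^4/4 + l*s^5/5 - s^6/6 + l*s^7/7 - s^8/8))
      (s^2*(s-l) * (s^6/(1-s^2))) s := by
    intro s hs hs'
    have a3 : (1:ℝ) - s^2 ≠ 0 := by nlinarith
    have hid := hasDerivAt_id' s
    have := (H_deriv l s hs hs').add (((((((((hid.pow 3).const_mul l).div_const 3).sub
      ((hid.pow 4).div_const 4)).add (((hid.pow 5).const_mul l).div_const 5)).sub
      ((hid.pow 6).div_const 6)).add (((hid.pow 7).const_mul l).div_const 7)).sub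
      ((hid.pow 8).div_const 8)))
    refine this.congr_deriv ?_
    field_simp
    push_cast
    ring
  have := anti v0 (fun s a b => key s (by linarith) (by linarith)) (fun s a b => ?_)
  · norm_num at this
    linarith
  · have : 0 < 1 - s^2 := sq_pos' a (by linarith)
    exact mul_nonpos_of_nonpos_of_nonneg (mul_nonpos_of_nonneg_of_nonpos (sq_nonneg s) (by linarith))
      (by positivity)

lemma bern {lo hi v : ℝ} (a : lo ≤ v) (b : v ≤ hi) (i j : ℕ) : 0 ≤ (v-lo)^i*(hi-v)^j :=
  mul_nonneg (pow_nonneg (by linarith) _) (pow_nonneg (by linarith) _)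

def R (q v : ℝ) : ℝ := (1+v)*(v^3/3-v^4/4+v^5/5-v^6/6+v^7/7-v^8/8 + (196/1000)*(1-v) - (196/10000)
  + v*(1-v) - v*(1-v)/(2*q)) - v*q/2

lemma R1 {v : ℝ} (a : (7/10) ≤ v) (b : v ≤ (8/10)) : 0 ≤ R (65/100) v := by
  have h := bern a b
  unfold R
  have h0 := h 9 0
  have h1 := h 8 1
  have h2 := h 7 2
  have h3 := h 6 3
  have h4 := h 5 4
  have h5 := h 4 5
  have h6 := h 3 6
  have h7 := h 2 7
  have h8 := h 1 8
  have h9 := h 0 9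
  ring_nf at h0 h1 h2 h3 h4 h5 h6 h7 h8 h9 ⊢
  linarith only [h0, h1, h2, h3, h4, h5, h6, h7, h8, h9]
lemma R2 {v : ℝ} (a : (8/10) ≤ v) (b : v ≤ (88/100)) : 0 ≤ R (53/100) v := by
  have h := bern a b
  unfold R
  have h0 := h 9 0
  have h1 := h 8 1
  have h2 := h 7 2
  have h3 := h 6 3
  have h4 := h 5 4
  have h5 := h 4 5
  have h6 := h 3 6
  have h7 := h 2 7
  have h8 := h 1 8
  have h9 := h 0 9
  ring_nf at h0 h1 h2 h3 h4 h5 h6 h7 h8 h9 ⊢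
  linarith only [h0, h1, h2, h3, h4, h5, h6, h7, h8, h9]
lemma R3 {v : ℝ} (a : (88/100) ≤ v) (b : v ≤ (94/100)) : 0 ≤ R (4/10) v := by
  have h := bern a b
  unfold R
  have h0 := h 9 0
  have h1 := h 8 1
  have h2 := h 7 2
  have h3 := h 6 3
  have h4 := h 5 4
  have h5 := h 4 5
  have h6 := h 3 6
  have h7 := h 2 7
  have h8 := h 1 8
  have h9 := h 0 9
  ring_nf at h0 h1 h2 h3 h4 h5 h6 h7 h8 h9 ⊢
  linarith only [h0, h1, h2, h3, h4, h5, h6, h7, h8, h9]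
lemma R4 {v : ℝ} (a : (94/100) ≤ v) (b : v ≤ 1) : 0 ≤ R (28/100) v := by
  have h := bern a b
  unfold R
  have h0 := h 9 0
  have h1 := h 8 1
  have h2 := h 7 2
  have h3 := h 6 3
  have h4 := h 5 4
  have h5 := h 4 5
  have h6 := h 3 6
  have h7 := h 2 7
  have h8 := h 1 8
  have h9 := h 0 9
  ring_nf at h0 h1 h2 h3 h4 h5 h6 h7 h8 h9 ⊢
  linarith only [h0, h1, h2, h3, h4, h5, h6, h7, h8, h9]

lemma endpoint {v X : ℝ} (a : (7/10) ≤ v) (b : v < 1) (X2 : X^2*(1-v^2) = 1) :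
    0 ≤ v^3/3-v^4/4+v^5/5-v^6/6+v^7/7-v^8/8 + (196/1000)*(1-v) - (196/10000) - v*(1-v)*(X-1) := by
  have gen : ∀ q : ℝ, 0 < q → 0 ≤ R q v → 0 ≤ v^3/3-v^4/4+v^5/5-v^6/6+v^7/7-v^8/8
      + (196/1000)*(1-v) - (196/10000) - v*(1-v)*(X-1) := by
    intro q hq hR
    have e : (1-v)*(1+v)*X^2 = 1 := by linarith
    have i1 : (1+v)*(v*(1-v)*X) ≤ (1+v)*(v*(1-v)/(2*q)) + v*q/2 := by
      have : (1+v)*(v*(1-v)/(2*q)) + v*q/2 - (1+v)*(v*(1-v)*X)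
        = v*((1+v)*(1-v))*(q*X-1)^2/(2*q) + v*q/2*(1-(1-v)*(1+v)*X^2) := by
        field_simp; ring
      rw [e] at this
      have : 0 ≤ v*((1+v)*(1-v))*(q*X-1)^2/(2*q) := by
        have := mul_pos (show 0 < 1+v by linarith) (show 0 < 1-v by linarith)
        have : 0 < v := by linarith
        positivity
      linarith
    have : 0 ≤ (1+v)*(v^3/3-v^4/4+v^5/5-v^6/6+v^7/7-v^8/8
      + (196/1000)*(1-v) - (196/10000) - v*(1-v)*(X-1)) := by
      unfold R at hR; linarith
    exact nonneg_of_mul_nonneg_right this (by linarith)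
  rcases le_total v (8/10) with h | h
  · exact gen _ (by norm_num) (R1 a h)
  rcases le_total v (88/100) with h' | h'
  · exact gen _ (by norm_num) (R2 h h')
  rcases le_total v (94/100) with h'' | h''
  · exact gen _ (by norm_num) (R3 h' h'')
  · exact gen _ (by norm_num) (R4 h'' b.le)

lemma case4 (l v : ℝ) (l1 : l < 1) (v0 : 0 ≤ v) (hvl : v ≤ l) :
    (v-l)^2/100 ≤ phi l v 0 := by
  have HP := H_poly l v l1 v0 hvl
  have U := sq_pos' v0 (by linarith : v < 1)
  have bU : 0 < √(1-v^2) := sqrt_pos.2 U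
  have UU : √(1-v^2)^2 = 1 - v^2 := sq_sqrt U.le
  unfold phi
  have e0 : √(1-(0:ℝ)^2) = 1 := by norm_num
  rw [e0]
  set u := √(1-v^2) with hu
  obtain ⟨X, hX⟩ : ∃ X, X = 1/u := ⟨_, rfl⟩
  have X0 : 0 < X := by rw [hX]; positivity
  have Xu : X * u = 1 := by rw [hX]; field_simp
  have X2 : X^2*(1-v^2) = 1 := by rw [← UU, ← mul_pow, Xu]; norm_num
  have e1 : v*(v-l)*1/u = v*(v-l)*X := by rw [hX]; ring
  rw [e1]
  obtain ⟨δ, hδ⟩ : ∃ δ, δ = l - v := ⟨_, rfl⟩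
  have hl : l = v + δ := by linarith
  have d0 : 0 ≤ δ := by linarith
  have d1 : δ < 1 - v := by linarith
  rcases le_total v (7/10) with h | h
  · have hX1 : X ≤ 141/100 := by
      by_contra hc
      push Not at hc
      have : (141/100:ℝ)^2 < X^2 := by nlinarith
      nlinarith
    -- X - 1 ≤ (49/60) v²
    have hX3 : X - 1 ≤ 33/40*v^2 := by
      have : (X-1)*(X+1) = X^2*v^2 := by linarith
      have h2 : X^2 ≤ 33/40 * (X+1) := by
        have : 1 ≤ X := by
          by_contra hc
          push Not at hc
          nlinarith
        nlinarith
      have h3 : (X-1)*(X+1) ≤ (33/40*v^2)*(X+1) := by nlinarith [sq_nonneg v]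
      exact le_of_mul_le_mul_right h3 (by linarith)
    have i1 : δ*v*(X-1) ≤ δ*v*(33/40*v^2) := mul_le_mul_of_nonneg_left hX3 (by positivity)
    have i2 : 0 ≤ l*v^5/5 - v^6/6 := by
      have : l*v^5/5 - v^6/6 = δ*v^5/5 + v^6/30 := by rw [hl]; ring
      rw [this]; positivity
    have i3 : 0 ≤ l*v^7/7 - v^8/8 := by
      have : l*v^7/7 - v^8/8 = δ*v^7/7 + v^8/56 := by rw [hl]; ring
      rw [this]; positivity
    have i4 : l*v^3/3 - v^4/4 = δ*v^3/3 + v^4/12 := by rw [hl]; ring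
    have i5 : δ*v^2*v ≤ δ*v^2*(7/10) := mul_le_mul_of_nonneg_left h (by positivity)
    have i6 : l^2/2 - v^2/2 = δ*v+δ^2/2 := by rw [hl]; ring
    have i7 : v*(v-l)*X = -(δ*v*(X-1)) - δ*v := by rw [hl]; ring
    have i8 : (v-l)^2 = δ^2 := by rw [hl]; ring
    have i9 : 0 ≤ (49/100)*δ^2 + v^4/12 - (35/100)*(δ*v^2) := by nlinarith [sq_nonneg ((35/100)*δ - (25/100)*v^2), sq_nonneg (δ), sq_nonneg (v^2), sq_nonneg ((7/10)*δ - (25/100)*v^2)]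
    have i10 : 0 ≤ δ*v^2 := by positivity
    rw [i8]
    linarith
  · have E := endpoint h (by linarith) X2
    have A0 : 0 ≤ v^4/12 + v^6/30 + v^8/56 - (196/10000) := by
      have : ((7/10):ℝ)^4 ≤ v^4 := by gcongr
      have : 0 ≤ v^6 := by positivity
      have : 0 ≤ v^8 := by positivity
      norm_num at *
      linarith
    have lin : 0 ≤ (v^4/12 + v^6/30 + v^8/56 - (196/10000)) + δ*(v^3/3+v^5/5+v^7/7+(196/1000)-v*(X-1)) := by
      have h1 : 0 < 1 - v := by linarith
      have : 0 ≤ (1-v)*((v^4/12 + v^6/30 + v^8/56 - (196/10000)) + δ*(v^3/3+v^5/5+v^7/7+(196/1000)-v*(X-1))) := by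
        have j1 := mul_nonneg (sub_nonneg.2 d1.le) A0
        have j2 := mul_nonneg d0 E
        linarith
      exact nonneg_of_mul_nonneg_right this h1
    have sqq : 0 ≤ (δ-(2/10))^2 := sq_nonneg _
    rw [hl] at HP ⊢
    linarith

lemma main (l v w : ℝ) (l0 : 0 ≤ l) (l1 : l < 1) (v0 : 0 ≤ v) (v1 : v < 1)
    (w0 : 0 ≤ w) (w1 : w < 1) : (v-l)^2/100 ≤ phi l v w := by
  have := sq_nonneg (v-l)
  rcases le_total l v with h | h
  · linarith [case1 l v w l0 v1 w0 w1 h]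
  rcases le_total v w with h' | h'
  · linarith [case2 l v w l1 v0 h h' w1]
  · rcases case3 l v w l1 w0 h' h with h2 | h2
    · linarith
    · linarith [case4 l v l1 v0 h]

lemma nsq (d : ℕ) (x : Euc d) : ‖x‖^2 = x 0^2 + x 1^2 + ∑ i : Fin d, x i.succ.succ^2 := by
  rw [EuclideanSpace.real_norm_sq_eq, Fin.sum_univ_succ, Fin.sum_univ_succ, ← add_assoc]
  rfl

lemma e_apply (d : ℕ) (j k : Fin (d+2)) : e d j k = if k = j then 1 else 0 := by
  simp [e]

lemma DR_0 (d : ℕ) (l : ℝ) (x : Euc d) : DR d l x 0 = x 0 / ‖x‖ := by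
  simp [DR, e_apply, Finset.sum_ite_eq]

lemma DR_1 (d : ℕ) (l : ℝ) (x : Euc d) : DR d l x 1 = (1 - 1/‖x‖) * x 1 + l := by
  simp [DR, e_apply, Finset.sum_ite_eq]

lemma DR_2 (d : ℕ) (l : ℝ) (x : Euc d) (i : Fin d) :
    DR d l x i.succ.succ = (1 - 1/‖x‖) * x i.succ.succ := by
  have h1 : i.succ.succ ≠ (1 : Fin (d+2)) := by
    intro h; have := congrArg Fin.val h; simp at this
  simp [DR, e_apply, Finset.sum_ite_eq, h1, Fin.succ_ne_zero]

lemma sub_nsq (d : ℕ) (p l : ℝ) (x : Euc d) : ‖x - (p • e d 0 + l • e d 1)‖^2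
    = (x 0 - p)^2 + (x 1 - l)^2 + ∑ i : Fin d, x i.succ.succ^2 := by
  have h1 : ∀ i : Fin d, i.succ.succ ≠ (1 : Fin (d+2)) := by
    intro i h; have := congrArg Fin.val h; simp at this
  rw [nsq]
  simp [e_apply, h1, Fin.succ_ne_zero]

lemma sub_nsq' (d : ℕ) (l : ℝ) (x : Euc d) : ‖x - l • e d 1‖^2
    = x 0^2 + (x 1 - l)^2 + ∑ i : Fin d, x i.succ.succ^2 := by
  have := sub_nsq d 0 l x
  simpa using this

lemma F_eq (d : ℕ) (l : ℝ) (x : Euc d) (h0 : 0 < x 0) (h1 : x 0 ≤ 1) :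
    F d l x = ((x 1 - l)^2 + ∑ i : Fin d, x i.succ.succ^2)/2 + H l (√(1 - x 0^2)) := by
  have hw : √(1 - x 0^2)^2 = 1 - x 0^2 := sq_sqrt (by nlinarith)
  have hw0 := sqrt_nonneg (1 - x 0^2)
  have w1 : √(1 - x 0^2) < 1 := by nlinarith
  unfold F H
  rw [sub_nsq']
  have : log (1 - √(1 - x 0^2)) + log (1 + √(1 - x 0^2)) = 2 * log (x 0) := by
    rw [← log_mul (by linarith) (by linarith)]
    have : (1 - √(1 - x 0^2)) * (1 + √(1 - x 0^2)) = x 0^2 := by linarith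
    rw [this, log_pow]; norm_num
  rw [this, hw]
  ring

lemma facts (d : ℕ) (l : ℝ) (l0 : 0 ≤ l) (x : Euc d) (h0 : 0 < x 0) (h1 : x 0 ≤ 1) :
    ∃ v w a B : ℝ, 0 ≤ v ∧ v < 1 ∧ 0 ≤ w ∧ w < 1 ∧ a = √(1-w^2) ∧ 0 ≤ B ∧
      F d l x - F d l (DR d l x) = B + phi l v w ∧
      ‖x - xStar d l‖^2 = (a - √(1-l^2))^2 + (a/√(1-v^2)*v - l)^2 + 2*B := by
  have hS : 0 ≤ ∑ i : Fin d, x i.succ.succ^2 := Finset.sum_nonneg fun _ _ => sq_nonneg _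
  have hn := nsq d x
  have hr : 0 < ‖x‖ := by
    rcases (norm_nonneg x).eq_or_lt with h | h
    · rw [← h] at hn; nlinarith
    · exact h
  have har : x 0 ≤ ‖x‖ := by
    apply le_of_sq_le_sq _ hr.le
    nlinarith
  have F1 := F_eq d l x h0 h1
  have F2 := F_eq d l (DR d l x) (by rw [DR_0]; positivity) (by rw [DR_0, div_le_one hr]; exact har)
  have D := sub_nsq d (√(1-l^2)) l x
  simp only [DR_0, DR_1, DR_2, mul_pow, ← Finset.mul_sum] at F2
  change ‖x - xStar d l‖^2 = _ at D
  set S := ∑ i : Fin d, x i.succ.succ^2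
  set r := ‖x‖
  set a := x 0
  set b := x 1
  have u0 : 0 < a/r := by positivity
  have u1 : a/r ≤ 1 := by rw [div_le_one hr]; exact har
  have v2 : √(1-(a/r)^2)^2 = 1-(a/r)^2 := sq_sqrt (by nlinarith)
  have w2 : √(1-a^2)^2 = 1-a^2 := sq_sqrt (by nlinarith)
  have v0 := sqrt_nonneg (1-(a/r)^2)
  have w0 := sqrt_nonneg (1-a^2)
  set v := √(1-(a/r)^2)
  set w := √(1-a^2)
  have su : √(1-v^2) = a/r := by rw [v2, sub_sub_cancel]; exact sqrt_sq u0.le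
  have sa : √(1-w^2) = a := by rw [w2, sub_sub_cancel]; exact sqrt_sq h0.le
  have rv : (r*v)^2 = b^2+S := by
    rw [mul_pow, v2]; field_simp; linarith
  have hb : b ≤ r*v := by
    apply le_of_sq_le_sq _ (by positivity)
    linarith
  have rr : a/(a/r) = r := by field_simp
  refine ⟨v, w, a, l*(r*v-b), v0, by nlinarith, w0, by nlinarith, sa.symm,
    mul_nonneg l0 (by linarith), ?_, ?_⟩
  · rw [F1, F2]
    unfold phi
    rw [su, sa]
    have : v*(v-l)*a/(a/r) = v*(v-l)*r := by field_simp
    rw [this]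
    have k : (1 - 1/r)^2*b^2 + (1-1/r)^2*S = (r-1)^2*v^2 := by
      have : (1 - 1/r)^2*b^2 + (1-1/r)^2*S = (1-1/r)^2*(b^2+S) := by ring
      rw [this, ← rv]; field_simp
    have k2 : ((1 - 1/r) * b + l - l)^2 = (1 - 1/r)^2*b^2 := by ring
    rw [k2, k]
    linarith
  · rw [D, su, rr]
    linarith

lemma seq_arg (l : ℝ) (l0 : 0 ≤ l) (l1 : l < 1) (v w a B D N : ℕ → ℝ)
    (v0 : ∀ n, 0 ≤ v n) (v1 : ∀ n, v n < 1) (w0 : ∀ n, 0 ≤ w n) (w1 : ∀ n, w n < 1)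
    (ha : ∀ n, a n = √(1 - w n^2)) (hB : ∀ n, 0 ≤ B n)
    (hD : ∀ n, D n = B n + phi l (v n) (w n))
    (hN : ∀ n, N n = (a n - √(1-l^2))^2 + (a n/√(1-v n^2)*v n - l)^2 + 2*B n)
    (hlim : Tendsto D atTop (nhds 0)) : Tendsto N atTop (nhds 0) := by
  have M := fun n => main l (v n) (w n) l0 l1 (v0 n) (v1 n) (w0 n) (w1 n)
  have lpos := sq_pos' l0 l1
  have lsq : √(1-l^2) ≠ 0 := (sqrt_pos.2 lpos).ne'
  have Bl : Tendsto B atTop (nhds 0) := squeeze_zero hB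
    (fun n => by nlinarith [M n, hD n, sq_nonneg (v n - l)]) hlim
  have Pl : Tendsto (fun n => phi l (v n) (w n)) atTop (nhds 0) := by
    have := hlim.sub Bl
    simp only [sub_zero] at this
    refine this.congr (fun n => ?_)
    rw [hD]; ring
  have pw : ∀ (k : ℕ) (f : ℕ → ℝ), k ≠ 0 → Tendsto (fun n => (f n - l)^(2*k)) atTop (nhds 0) →
      Tendsto f atTop (nhds l) := by
    intro k f hk h
    have := h.abs
    rw [abs_zero] at this
    rw [tendsto_iff_dist_tendsto_zero, Metric.tendsto_atTop]
    intro ε hε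
    obtain ⟨n0, hn0⟩ := Metric.tendsto_atTop.1 this (ε^(2*k)) (by positivity)
    refine ⟨n0, fun n hn => ?_⟩
    have := hn0 n hn
    simp only [Real.dist_eq, sub_zero, abs_abs, abs_pow] at this ⊢
    exact lt_of_pow_lt_pow_left₀ _ hε.le this
  have vl : Tendsto v atTop (nhds l) := by
    apply pw 1 v (by norm_num)
    refine squeeze_zero (fun n => by rw [pow_mul]; positivity) (fun n => ?_) (by simpa using Pl.const_mul 100)
    have := M n
    norm_num
    linarith
  have cont : ContinuousAt (fun s => s*(s-l)/√(1-s^2)) l := by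
    exact (m_deriv l l l0 l1).continuousAt
  have t1 : Tendsto (fun n => v n*(v n-l)/√(1-v n^2)) atTop (nhds 0) := by
    have := cont.tendsto.comp vl
    simp only [sub_self, mul_zero, zero_div] at this
    exact this
  have a01 : ∀ n, |a n| ≤ 1 := by
    intro n
    rw [ha, abs_of_nonneg (sqrt_nonneg _)]
    exact sqrt_le_one.2 (by nlinarith [w0 n])
  have t2 : Tendsto (fun n => v n*(v n-l)/√(1-v n^2) * a n) atTop (nhds 0) := by
    refine squeeze_zero_norm (fun n => ?_) (by simpa using t1.abs)
    rw [norm_mul, Real.norm_eq_abs, Real.norm_eq_abs]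
    exact mul_le_of_le_one_right (abs_nonneg _) (a01 n)
  have t3 : Tendsto (fun n => H l (v n)) atTop (nhds (H l l)) :=
    (H_deriv l l l0 l1).continuousAt.tendsto.comp vl
  have t4 : Tendsto (fun n => H l (w n) - H l l) atTop (nhds 0) := by
    have := ((Pl.sub t2).add (t3.sub_const (H l l))).add ((vl.pow 2).div_const 2 |>.sub_const (l^2/2))
    simp only [sub_self, add_zero] at this
    refine this.congr (fun n => ?_)
    unfold phi
    rw [← ha]
    ring
  have wl : Tendsto w atTop (nhds l) := by
    apply pw 2 w (by norm_num)
    refine squeeze_zero (fun n => by rw [pow_mul]; positivity) (fun n => ?_) (by simpa using t4.const_mul 24)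
    have := H_lower l (w n) l0 l1 (w0 n) (w1 n)
    norm_num
    linarith
  have cs : ContinuousAt (fun s : ℝ => √(1-s^2)) l := by fun_prop
  have al : Tendsto a atTop (nhds (√(1-l^2))) := by
    have := cs.tendsto.comp wl
    exact this.congr (fun n => (ha n).symm)
  have ul : Tendsto (fun n => √(1-v n^2)) atTop (nhds (√(1-l^2))) := cs.tendsto.comp vl
  have := ((al.sub_const (√(1-l^2))).pow 2).add
    (((((al.div ul lsq).mul vl).sub_const l).pow 2)) |>.add (Bl.const_mul 2)
  simp only [div_self lsq, one_mul, sub_self, mul_zero, add_zero] at this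
  norm_num at this
  exact this.congr (fun n => (hN n).symm)

end DRaux

/-- For `λ ∈ [0,1)` and every `t > 0` there is `c > 0` with
`F(x) − F(T x) ≥ c` for every `x ∈ Δ` with `‖x − x*‖ ≥ t`; i.e.
`sup_{x ∈ Δ \ B(x*,t)} [F(T x) − F(x)] < 0`. -/
theorem stmt5 (d : ℕ) (lam : ℝ) (h0 : 0 ≤ lam) (h1 : lam < 1) :
    ∀ t : ℝ, 0 < t → ∃ c : ℝ, 0 < c ∧
      ∀ x ∈ Delta d, t ≤ ‖x - xStar d lam‖ →
        c ≤ F d lam x - F d lam (DR d lam x) := by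
  intro t ht
  by_contra hc
  push Not at hc
  choose x hx hxt hxD using fun n : ℕ => hc (1/((n:ℝ)+1)) (by positivity)
  choose v w a B v0 v1 w0 w1 ha hB hD hN using
    fun n => DRaux.facts d lam h0 (x n) (hx n).1 (hx n).2
  have hlim : Tendsto (fun n => F d lam (x n) - F d lam (DR d lam (x n))) atTop (nhds 0) := by
    refine squeeze_zero (fun n => ?_) (fun n => (hxD n).le) tendsto_one_div_add_atTop_nhds_zero_nat
    have M := DRaux.main lam (v n) (w n) h0 h1 (v0 n) (v1 n) (w0 n) (w1 n)
    rw [hD]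
    nlinarith [hB n, sq_nonneg (v n - lam)]
  have := DRaux.seq_arg lam h0 h1 v w a B _ _ v0 v1 w0 w1 ha hB hD hN hlim
  have h2 : t^2 ≤ 0 := ge_of_tendsto' this (fun n => by
    have := hxt n
    gcongr)
  nlinarith
end
end
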